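/- There exist constants c₁, c₂ > 0 and N such that for all n ≥ N, when two functions a, b : {1, …, n} → {1, …, n} are chosen uniformly and independently at random, the probability that the resulting 2-letter n-state automaton ({1, …, n}, {a, b}) is not synchronizing lies between c₁/n and c₂/n; equivalently, the probability of being synchronizing equals 1 − Θ(1/n). -/

import Mathlib

/-- The action of a word `w` on a state `q` in the DFA with transition function `δ`. -/
def wordAct {Q A : Type*} (δ : Q → A → Q) (q : Q) (w : List A) : Q :=
  w.foldl δ q

/-- `w` is a reset word: it sends all states to one common state. -/
def IsResetWord {Q A : Type*} (δ : Q → A → Q) (w : List A) : Prop :=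
  ∀ p q : Q, wordAct δ p w = wordAct δ q w

/-- A DFA is synchronizing if it admits a reset word. -/
def Synchronizing {Q A : Type*} (δ : Q → A → Q) : Prop :=
  ∃ w : List A, IsResetWord δ w

open scoped Classical in
/-- The probability, for a pair of transition functions `(a, b)` chosen uniformly and
independently among all maps `{1,…,n} → {1,…,n}`, that the resulting 2-letter
automaton is NOT synchronizing. -/
noncomputable def probNotSynchronizing (n : ℕ) : ℝ :=
  ((Finset.univ.filter fun fg : (Fin n → Fin n) × (Fin n → Fin n) =>
      ¬ Synchronizing fun q x => if x = true then fg.2 q else fg.1 q).card : ℝ) /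
    (Fintype.card ((Fin n → Fin n) × (Fin n → Fin n)) : ℝ)

/-!
Upper bound. Outside an event of probability `O(1 / n)`, no set of boundedly many states spans more
arrows of `a` and `b` than it has states. Then any two states can be moved, by powers of `b` and at
most one use of `a`, to a pair which powers of `b` spread over `h` disjoint pairs. Expose `a` on
these pairs one at a time: either the two images have the same eventual `b`-orbit, which merges
them, or their `b`-orbits provide `h` new pairs, or, with probability at most about a small power
`θ` of `1 / n`, the pair is lost. The number of remaining pairs is a branching process which dies
out with probability about `θ ^ h`, and a collision occurs long before the supply of fresh states
is exhausted, since `b` has about `√n` periodic points. For `h = 16` this beats the union bound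
over all `n ^ 2` pairs.

Lower bound. With probability of order `1 / n`, some state is a fixed point of both letters and the
image of no other state.
-/

namespace RandomAutomaton

open Filter Finset Function Real
open scoped Nat BigOperators Topology

section Probability

variable {Ω Ω' ι : Type*} [Fintype Ω] [Fintype Ω']

open scoped Classical in
/-- The probability of the event `P` under the uniform distribution on the finite type `Ω`
(with value `0` when `Ω` is empty). -/
noncomputable def prob (P : Ω → Prop) : ℝ :=
  (#{ω | P ω} : ℝ) / Fintype.card Ω

theorem prob_eq_card_div (P : Ω → Prop) [DecidablePred P] :
    prob P = #{ω | P ω} / Fintype.card Ω := by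
  rw [prob]
  congr!

theorem prob_eq_expect (P : Ω → Prop) [DecidablePred P] :
    prob P = 𝔼 ω, if P ω then (1 : ℝ) else 0 := by
  rw [Fintype.expect_eq_sum_div_card, sum_boole, prob_eq_card_div]

theorem prob_nonneg (P : Ω → Prop) : 0 ≤ prob P := by
  unfold prob
  positivity

theorem prob_le_one (P : Ω → Prop) : prob P ≤ 1 :=
  div_le_one_of_le₀ (mod_cast card_le_univ _) (Nat.cast_nonneg _)

theorem prob_mono {P Q : Ω → Prop} (h : ∀ ω, P ω → Q ω) : prob P ≤ prob Q := by
  unfold prob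
  gcongr with ω
  exact h ω

theorem prob_eq_zero {P : Ω → Prop} (h : ∀ ω, ¬P ω) : prob P = 0 := by
  simp [prob, h]

theorem prob_not [Nonempty Ω] (P : Ω → Prop) : prob (fun ω => ¬P ω) = 1 - prob P := by
  classical
  have hcard : (#{ω | P ω} : ℝ) + #{ω | ¬P ω} = Fintype.card Ω :=
    mod_cast card_filter_add_card_filter_not (s := univ) P
  rw [prob_eq_card_div, prob_eq_card_div, ← hcard, eq_sub_iff_add_eq', ← add_div, hcard,
    div_self (Nat.cast_ne_zero.2 Fintype.card_ne_zero)]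

theorem prob_or_le (P Q : Ω → Prop) : prob (fun ω => P ω ∨ Q ω) ≤ prob P + prob Q := by
  classical
  simp only [prob_eq_card_div]
  rw [← add_div, filter_or]
  gcongr
  exact mod_cast card_union_le _ _

theorem prob_exists_le (s : Finset ι) (P : ι → Ω → Prop) :
    prob (fun ω => ∃ i ∈ s, P i ω) ≤ ∑ i ∈ s, prob (P i) := by
  classical
  simp only [prob_eq_card_div]
  rw [← sum_div]
  have hunion : ({ω | ∃ i ∈ s, P i ω} : Finset Ω) = s.biUnion fun i => {ω | P i ω} := by
    ext ω; simp
  rw [hunion]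
  gcongr
  exact mod_cast card_biUnion_le

theorem prob_exists_eq_sum (s : Finset ι) (P : ι → Ω → Prop)
    (hdisj : ∀ ω, ∀ i ∈ s, ∀ j ∈ s, P i ω → P j ω → i = j) :
    prob (fun ω => ∃ i ∈ s, P i ω) = ∑ i ∈ s, prob (P i) := by
  classical
  simp only [prob_eq_card_div]
  rw [← sum_div]
  have hunion : ({ω | ∃ i ∈ s, P i ω} : Finset Ω) = s.biUnion fun i => {ω | P i ω} := by
    ext ω; simp
  rw [hunion, card_biUnion, Nat.cast_sum]
  exact fun i hi j hj hij => disjoint_filter.2 fun ω _ h h' => hij (hdisj ω i hi j hj h h')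

theorem prob_congr_equiv (e : Ω ≃ Ω') {P : Ω → Prop} {Q : Ω' → Prop}
    (h : ∀ ω, P ω ↔ Q (e ω)) : prob P = prob Q := by
  classical
  rw [prob_eq_expect, prob_eq_expect]
  exact Fintype.expect_equiv e _ _ fun ω => by simp only [h]

theorem prob_prod (P : Ω → Ω' → Prop) :
    prob (fun x : Ω × Ω' => P x.1 x.2) = 𝔼 ω', prob fun ω => P ω ω' := by
  classical
  simp only [prob_eq_expect]
  rw [expect_comm, ← expect_product' univ univ fun ω ω' => if P ω ω' then (1 : ℝ) else 0,
    univ_product_univ]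

theorem prob_prod_comm (P : Ω → Ω' → Prop) :
    prob (fun x : Ω × Ω' => P x.1 x.2) = prob fun x : Ω' × Ω => P x.2 x.1 :=
  prob_congr_equiv (P := fun x => P x.1 x.2) (Q := fun x => P x.2 x.1) (Equiv.prodComm Ω Ω')
    fun _ => Iff.rfl

theorem prob_prod_and (P : Ω → Prop) (Q : Ω' → Prop) :
    prob (fun x : Ω × Ω' => P x.1 ∧ Q x.2) = prob P * prob Q := by
  classical
  simp only [prob_eq_card_div]
  rw [← univ_product_univ, filter_product, card_product, Fintype.card_prod]
  push_cast
  exact mul_div_mul_comm _ _ _ _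

theorem prob_le_of_expect_le {X : Ω → ℝ} {r c : ℝ} (hX : ∀ ω, 0 ≤ X ω) (hr : 0 < r)
    (hc : 𝔼 ω, X ω ≤ r * c) : prob (fun ω => r ≤ X ω) ≤ c := by
  classical
  refine le_of_mul_le_mul_left ?_ hr
  calc r * prob (fun ω => r ≤ X ω) = 𝔼 ω, r * if r ≤ X ω then 1 else 0 := by
        rw [prob_eq_expect, mul_expect]
    _ ≤ 𝔼 ω, X ω := expect_le_expect fun ω _ => by
        split_ifs with h
        · rwa [mul_one]
        · rw [mul_zero]; exact hX ω
    _ ≤ r * c := hc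

theorem prob_prod_le_add {P : Ω → Ω' → Prop} {G : Ω' → Prop} {r : ℝ} (hr : 0 ≤ r)
    (h : ∀ ω', G ω' → prob (fun ω => P ω ω') ≤ r) :
    prob (fun x : Ω × Ω' => P x.1 x.2) ≤ prob (fun ω' => ¬G ω') + r := by
  classical
  rcases isEmpty_or_nonempty Ω' with _ | _
  · rw [prob_eq_zero fun x : Ω × Ω' => isEmptyElim x.2]
    exact add_nonneg (prob_nonneg _) hr
  calc prob (fun x : Ω × Ω' => P x.1 x.2) = 𝔼 ω', prob fun ω => P ω ω' := prob_prod P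
    _ ≤ 𝔼 ω', ((if ¬G ω' then 1 else 0) + r) := expect_le_expect fun ω' _ => by
        split_ifs with hG
        · linarith [h ω' hG]
        · linarith [prob_le_one fun ω => P ω ω']
    _ = prob (fun ω' => ¬G ω') + r := by
        rw [expect_add_distrib, Fintype.expect_const, prob_eq_expect]

theorem prob_mem (S : Finset Ω) :
    prob (fun ω => ω ∈ S) = #S / Fintype.card Ω := by
  simp [prob]

theorem prob_exists_finset_le {α : Type*} [Fintype α] (K : Finset ℕ)
    {P : Finset α → Ω → Prop} {p : ℕ → ℝ} (hp : ∀ V, #V ∈ K → prob (P V) ≤ p #V) :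
    prob (fun ω => ∃ V, #V ∈ K ∧ P V ω) ≤ ∑ k ∈ K, (Fintype.card α).choose k * p k :=
  calc prob (fun ω => ∃ V, #V ∈ K ∧ P V ω)
      ≤ prob (fun ω => ∃ k ∈ K, ∃ V ∈ powersetCard k univ, P V ω) :=
        prob_mono fun ω ⟨V, hV, h⟩ => ⟨#V, hV, V, by simp [mem_powersetCard], h⟩
    _ ≤ ∑ k ∈ K, ∑ V ∈ powersetCard k univ, prob (P V) :=
        (prob_exists_le K _).trans (sum_le_sum fun k _ => prob_exists_le _ P)
    _ ≤ ∑ k ∈ K, ∑ _V ∈ powersetCard k (univ : Finset α), p k := by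
        refine sum_le_sum fun k hk => sum_le_sum fun V hV => ?_
        obtain rfl := (mem_powersetCard.1 hV).2
        exact hp V hk
    _ = ∑ k ∈ K, (Fintype.card α).choose k * p k := by
        simp only [sum_const, card_powersetCard, card_univ, nsmul_eq_mul]

end Probability

section Collisions

variable {α β : Type*} [Fintype α] [Nonempty α] {f : α → β} {S : Finset β}

theorem inv_card_le_prob_eq (hf : ∀ x, f x ∈ S) :
    (#S : ℝ)⁻¹ ≤ prob fun p : α × α => f p.1 = f p.2 := by
  classical
  have hfibres : #{p : α × α | f p.1 = f p.2} = ∑ z ∈ S, #{x | f x = z} ^ 2 := by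
    rw [card_eq_sum_card_fiberwise fun p _ => hf (Prod.fst p)]
    refine sum_congr rfl fun z _ => ?_
    rw [sq, ← card_product]
    congr 1
    ext p
    simp only [mem_filter, mem_univ, true_and, mem_product]
    exact ⟨fun ⟨h, hz⟩ => ⟨hz, h ▸ hz⟩, fun ⟨h, h'⟩ => ⟨h.trans h'.symm, h⟩⟩
  have hcauchy : Fintype.card α ^ 2 ≤ #S * #{p : α × α | f p.1 = f p.2} := by
    rw [hfibres, ← card_univ, card_eq_sum_card_fiberwise fun x _ => hf x]
    exact sq_sum_le_card_mul_sum_sq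
  have hS : 0 < #S := card_pos.2 ⟨_, hf (Classical.arbitrary α)⟩
  have hα : 0 < Fintype.card α := Fintype.card_pos
  rw [prob_eq_card_div, inv_eq_one_div, div_le_div_iff₀ (by positivity) (by positivity), one_mul,
    Fintype.card_prod, ← sq, mul_comm]
  exact mod_cast hcauchy

theorem prob_ne_le {m : ℕ} (hf : ∀ x, f x ∈ S) (hm : #S ≤ m) :
    prob (fun p : α × α => f p.1 ≠ f p.2) ≤ 1 - (m : ℝ)⁻¹ := by
  rw [prob_not]
  have hS : 0 < #S := card_pos.2 ⟨_, hf (Classical.arbitrary α)⟩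
  have : (m : ℝ)⁻¹ ≤ (#S : ℝ)⁻¹ := by gcongr
  linarith [inv_card_le_prob_eq hf]

end Collisions

section RandomMaps

variable {α β : Type*} [Fintype α] [DecidableEq α] [Fintype β]

theorem prob_forall_mem (S : α → Finset β) :
    prob (fun f : α → β => ∀ x, f x ∈ S x) = ∏ x, (#(S x) / Fintype.card β : ℝ) := by
  classical
  have hpi : ({f | ∀ x, f x ∈ S x} : Finset (α → β)) = Fintype.piFinset S := by
    ext f; simp
  rw [prob_eq_card_div, hpi, Fintype.card_piFinset, Fintype.card_fun, prod_div_distrib, prod_const,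
    card_univ]
  push_cast
  rfl

theorem prob_forall_mem_of_mem [Nonempty β] (F : Finset α) (S : α → Finset β) :
    prob (fun f : α → β => ∀ x ∈ F, f x ∈ S x) = ∏ x ∈ F, (#(S x) / Fintype.card β : ℝ) :=
  calc prob (fun f : α → β => ∀ x ∈ F, f x ∈ S x)
      = prob fun f : α → β => ∀ x, f x ∈ if x ∈ F then S x else univ := by
        congr! 4 with f x
        split_ifs with hx <;> simp [hx]
    _ = ∏ x, (if x ∈ F then #(S x) / Fintype.card β else 1 : ℝ) := by
        rw [prob_forall_mem]
        refine prod_congr rfl fun x _ => ?_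
        split_ifs
        · rfl
        · rw [card_univ, div_self (Nat.cast_ne_zero.2 Fintype.card_ne_zero)]
    _ = ∏ x ∈ F, (#(S x) / Fintype.card β : ℝ) := Fintype.prod_ite_mem F _

-- Swapping the value at `x` with an independent copy of it preserves the uniform distribution.
theorem prob_eq_expect_update [Nonempty β] (x : α) (P : (α → β) → Prop) :
    prob P = 𝔼 u, prob fun f => P (update f x u) := by
  let e : (α → β) × β ≃ (α → β) × β :=
    { toFun := fun p => (update p.1 x p.2, p.1 x)
      invFun := fun p => (update p.1 x p.2, p.1 x)
      left_inv := fun p => by simp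
      right_inv := fun p => by simp }
  calc prob P = prob (fun p : (α → β) × β => P p.1) := by
        rw [prob_prod fun f _ => P f, Fintype.expect_const]
    _ = prob (fun p : (α → β) × β => P (update p.1 x p.2)) :=
        (prob_congr_equiv e (P := fun p => P (update p.1 x p.2)) (Q := fun p => P p.1)
          fun _ => Iff.rfl).symm
    _ = 𝔼 u, prob fun f => P (update f x u) := prob_prod fun f u => P (update f x u)

end RandomMaps

section Merging

variable {Q A : Type*} {δ : Q → A → Q} {x y : Q}

/-- Two states are mergeable if some word sends them to the same state. A finite automaton is
synchronizing as soon as all pairs of states are mergeable. -/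
def Mergeable (δ : Q → A → Q) (x y : Q) : Prop :=
  ∃ w, wordAct δ x w = wordAct δ y w

theorem wordAct_append (x : Q) (v w : List A) :
    wordAct δ x (v ++ w) = wordAct δ (wordAct δ x v) w :=
  List.foldl_append

theorem Mergeable.refl (x : Q) : Mergeable δ x x :=
  ⟨[], rfl⟩

theorem Mergeable.symm (h : Mergeable δ x y) : Mergeable δ y x :=
  h.imp fun _ => Eq.symm

theorem Mergeable.of_step (c : A) (h : Mergeable δ (δ x c) (δ y c)) : Mergeable δ x y :=
  h.elim fun w hw => ⟨c :: w, hw⟩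

theorem synchronizing_of_forall_mergeable [Finite Q] (h : ∀ x y, Mergeable δ x y) :
    Synchronizing δ := by
  classical
  have := Fintype.ofFinite Q
  suffices ∀ s : Finset Q, ∃ w, ∀ p ∈ s, ∀ q ∈ s, wordAct δ p w = wordAct δ q w by
    obtain ⟨w, hw⟩ := this univ
    exact ⟨w, fun p q => hw p (mem_univ p) q (mem_univ q)⟩
  intro s
  induction s using Finset.induction_on with
  | empty => exact ⟨[], by simp⟩
  | insert x s _ ih =>
    obtain ⟨w, hw⟩ := ih
    rcases s.eq_empty_or_nonempty with rfl | ⟨z, hz⟩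
    · exact ⟨[], by simp⟩
    obtain ⟨v, hv⟩ := h (wordAct δ x w) (wordAct δ z w)
    have hcollapse : ∀ p ∈ insert x s, wordAct δ p (w ++ v) = wordAct δ z (w ++ v) := by
      intro p hp
      rw [wordAct_append, wordAct_append]
      rcases mem_insert.1 hp with rfl | hp
      · exact hv
      · rw [hw p hp z hz]
    exact ⟨w ++ v, fun p hp q hq => (hcollapse p hp).trans (hcollapse q hq).symm⟩

/-- The two-letter automaton in which the letter `false` acts by `a` and `true` by `b`. -/
def automaton (a b : Q → Q) (q : Q) (c : Bool) : Q :=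
  if c = true then b q else a q

variable {a b : Q → Q}

theorem Mergeable.of_left (h : Mergeable (automaton a b) (a x) (a y)) :
    Mergeable (automaton a b) x y :=
  .of_step false h

theorem Mergeable.of_iterate (i : ℕ) (h : Mergeable (automaton a b) (b^[i] x) (b^[i] y)) :
    Mergeable (automaton a b) x y := by
  induction i generalizing x y with
  | zero => exact h
  | succ i ih => exact .of_step true (ih h)

end Merging

section Orbits

variable {α : Type*} [DecidableEq α] {f b : α → α} {h i j : ℕ} {V W Z : Finset α} {u v z : α}

/-- The first `j` states `v, b v, …, b^[j - 1] v` of the forward orbit of `v`. -/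
def orbitPrefix (b : α → α) (j : ℕ) (v : α) : Finset α :=
  (range j).image fun i => b^[i] v

/-- The states of `V` whose `f`-arrow stays in `V`; they index the arrows of `f` spanned by `V`. -/
def internal (f : α → α) (V : Finset α) : Finset α :=
  {z ∈ V | f z ∈ V}

/-- The states of `V` whose `f`-arrow leaves `V`; there are none when `V` is closed under `f`. -/
def exits (f : α → α) (V : Finset α) : Finset α :=
  {z ∈ V | f z ∉ V}

theorem mem_orbitPrefix : z ∈ orbitPrefix b j v ↔ ∃ i < j, b^[i] v = z := by
  simp [orbitPrefix]

theorem iterate_mem_orbitPrefix (hij : i < j) : b^[i] v ∈ orbitPrefix b j v :=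
  mem_orbitPrefix.2 ⟨i, hij, rfl⟩

theorem self_mem_orbitPrefix (hj : 0 < j) : v ∈ orbitPrefix b j v :=
  iterate_mem_orbitPrefix hj

theorem card_orbitPrefix_le : #(orbitPrefix b j v) ≤ j :=
  card_image_le.trans_eq (card_range j)

theorem card_internal_add_card_exits : #(internal f V) + #(exits f V) = #V :=
  card_filter_add_card_filter_not _

theorem exits_union_subset : exits f (V ∪ W) ⊆ exits f V ∪ exits f W := by
  intro z
  simp only [exits, mem_filter, mem_union]
  tauto

theorem exits_orbitPrefix_subset : exits b (orbitPrefix b j v) ⊆ {b^[j - 1] v} := by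
  intro z hz
  obtain ⟨hz, hbz⟩ := mem_filter.1 hz
  obtain ⟨i, hi, rfl⟩ := mem_orbitPrefix.1 hz
  rw [← iterate_succ_apply' b] at hbz
  have : j ≤ i + 1 := not_lt.1 fun hlt => hbz (iterate_mem_orbitPrefix hlt)
  rw [mem_singleton, show i = j - 1 by omega]

theorem card_exits_union_orbitPrefix_le :
    #(exits b (V ∪ orbitPrefix b j v)) ≤ #(exits b V) + 1 :=
  calc #(exits b (V ∪ orbitPrefix b j v))
      ≤ #(exits b V) + #(exits b (orbitPrefix b j v)) :=
        (card_le_card exits_union_subset).trans (card_union_le _ _)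
    _ ≤ #(exits b V) + 1 := by
        gcongr
        exact card_le_card exits_orbitPrefix_subset

theorem exits_union_orbitPrefix_subset (hv : b^[j] v ∈ V ∪ orbitPrefix b j v) :
    exits b (V ∪ orbitPrefix b j v) ⊆ exits b V := by
  intro z hz
  obtain ⟨hzW, hbz⟩ := mem_filter.1 hz
  rcases mem_union.1 hzW with hzV | hz
  · exact mem_filter.2 ⟨hzV, fun h => hbz (mem_union_left _ h)⟩
  · obtain ⟨i, hi, rfl⟩ := mem_orbitPrefix.1 hz
    rw [← iterate_succ_apply' b] at hbz
    rcases (show i + 1 ≤ j from hi).lt_or_eq with hlt | rfl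
    · exact absurd (mem_union_right _ (iterate_mem_orbitPrefix hlt)) hbz
    · exact absurd hv hbz

theorem exits_orbitPrefix_minimalPeriod (hv : v ∈ periodicPts b) :
    exits b (orbitPrefix b (minimalPeriod b v) v) = ∅ := by
  have hreturn : b^[minimalPeriod b v] v ∈ ∅ ∪ orbitPrefix b (minimalPeriod b v) v := by
    rw [iterate_minimalPeriod]
    exact mem_union_right _ (self_mem_orbitPrefix (minimalPeriod_pos_of_mem_periodicPts hv))
  simpa [exits] using exits_union_orbitPrefix_subset hreturn

/-- The first `h` states of the forward orbit of `v` are distinct and lie outside `V`. This is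
phrased as: each of them avoids `V` and its predecessors on the orbit. -/
def Fresh (b : α → α) (h : ℕ) (V : Finset α) (v : α) : Prop :=
  ∀ i < h, b^[i] v ∉ V ∪ orbitPrefix b i v

theorem Fresh.mono (hVW : V ⊆ W) (hv : Fresh b h W v) : Fresh b h V v :=
  fun i hi hmem => hv i hi (union_subset_union_left hVW hmem)

theorem Fresh.iterate_notMem (hv : Fresh b h V v) (hi : i < h) : b^[i] v ∉ V :=
  fun hmem => hv i hi (mem_union_left _ hmem)

theorem Fresh.injOn (hv : Fresh b h V v) : Set.InjOn (fun i => b^[i] v) (Set.Iio h) := by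
  intro i hi j hj hij
  by_contra hne
  rcases Nat.lt_or_gt_of_ne hne with hlt | hlt
  · exact hv j hj (mem_union_right _ (mem_orbitPrefix.2 ⟨i, hlt, hij⟩))
  · exact hv i hi (mem_union_right _ (mem_orbitPrefix.2 ⟨j, hlt, hij.symm⟩))

theorem exists_superset_of_not_fresh (hv : ¬Fresh b h V v) :
    ∃ W, V ⊆ W ∧ v ∈ W ∧ #W ≤ #V + h ∧ exits b W ⊆ exits b V := by
  simp only [Fresh, not_forall, not_not] at hv
  obtain ⟨i, hi, hmem⟩ := hv
  refine ⟨V ∪ orbitPrefix b i v, subset_union_left, ?_, ?_, exits_union_orbitPrefix_subset hmem⟩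
  · rcases i.eq_zero_or_pos with rfl | hpos
    · exact hmem
    · exact mem_union_right _ (self_mem_orbitPrefix hpos)
  · calc #(V ∪ orbitPrefix b i v) ≤ #V + #(orbitPrefix b i v) := card_union_le _ _
      _ ≤ #V + h := by gcongr; exact card_orbitPrefix_le.trans hi.le

/-- The orbits of `u` and `v` are fresh, and disjoint from each other, up to time `h`. -/
def FreshPair (b : α → α) (h : ℕ) (Z : Finset α) (u v : α) : Prop :=
  Fresh b h Z u ∧ Fresh b h (Z ∪ orbitPrefix b h u) v

end Orbits

section PairLists

variable {α : Type*}

/-- The states occurring in a list of pairs, with multiplicity. -/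
def endpoints (l : List (α × α)) : List α :=
  l.map Prod.fst ++ l.map Prod.snd

theorem mem_endpoints {l : List (α × α)} {z : α} :
    z ∈ endpoints l ↔ ∃ p ∈ l, p.1 = z ∨ p.2 = z := by
  simp only [endpoints, List.mem_append, List.mem_map, ← exists_or, ← and_or_left]

theorem length_endpoints (l : List (α × α)) : (endpoints l).length = 2 * l.length := by
  simp [endpoints, two_mul]

theorem endpoints_cons_perm (p : α × α) (l : List (α × α)) :
    (endpoints (p :: l)).Perm (p.1 :: p.2 :: endpoints l) := by
  simp [endpoints, List.perm_middle]

theorem endpoints_append_perm (l₁ l₂ : List (α × α)) :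
    (endpoints (l₁ ++ l₂)).Perm (endpoints l₁ ++ endpoints l₂) := by
  simp only [endpoints, List.map_append, List.append_assoc]
  exact (List.perm_append_comm_assoc _ _ _).append_left _

/-- The pairs visited by `u` and `v` when `b` is applied `0, …, h - 1` times. -/
def orbitPairs (b : α → α) (h : ℕ) (u v : α) : List (α × α) :=
  (List.range h).map fun i => (b^[i] u, b^[i] v)

theorem mem_orbitPairs {b : α → α} {h : ℕ} {u v : α} {p : α × α} :
    p ∈ orbitPairs b h u v ↔ ∃ i < h, (b^[i] u, b^[i] v) = p := by
  simp [orbitPairs]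

theorem length_orbitPairs (b : α → α) (h : ℕ) (u v : α) : (orbitPairs b h u v).length = h := by
  simp [orbitPairs]

/-- A pair `(x, y)` is rich if powers of `b` carry it to `h` pairs whose `2 * h` entries are
distinct. Merging any one of these pairs by a word merges `(x, y)`. -/
def Rich (b : α → α) (h : ℕ) (x y : α) : Prop :=
  ∃ l : List (α × α), l.length = h ∧ (endpoints l).Nodup ∧ ∀ p ∈ l, ∃ i, (b^[i] x, b^[i] y) = p

variable [DecidableEq α] {b : α → α} {h : ℕ} {Z : Finset α} {u v x y : α}

theorem FreshPair.notMem (huv : FreshPair b h Z u v) :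
    ∀ z ∈ endpoints (orbitPairs b h u v), z ∉ Z := by
  intro z hz
  obtain ⟨_, hp, hpz⟩ := mem_endpoints.1 hz
  obtain ⟨i, hi, rfl⟩ := mem_orbitPairs.1 hp
  rcases hpz with rfl | rfl
  · exact huv.1.iterate_notMem hi
  · exact (huv.2.mono subset_union_left).iterate_notMem hi

theorem FreshPair.nodup (huv : FreshPair b h Z u v) : (endpoints (orbitPairs b h u v)).Nodup := by
  simp only [endpoints, orbitPairs, List.map_map, comp_def]
  refine List.nodup_append'.2 ⟨?_, ?_, ?_⟩
  · exact List.Nodup.map_on (fun i hi j hj => huv.1.injOn (List.mem_range.1 hi)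
      (List.mem_range.1 hj)) List.nodup_range
  · exact List.Nodup.map_on (fun i hi j hj => huv.2.injOn (List.mem_range.1 hi)
      (List.mem_range.1 hj)) List.nodup_range
  · intro z hzu hzv
    obtain ⟨i, hi, rfl⟩ := List.mem_map.1 hzu
    obtain ⟨j, hj, hij⟩ := List.mem_map.1 hzv
    refine huv.2.iterate_notMem (List.mem_range.1 hj) (mem_union_right _ ?_)
    exact hij ▸ iterate_mem_orbitPrefix (List.mem_range.1 hi)

theorem FreshPair.rich (huv : FreshPair b h Z u v) : Rich b h u v :=
  ⟨orbitPairs b h u v, length_orbitPairs b h u v, huv.nodup,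
    fun _ hp => (mem_orbitPairs.1 hp).imp fun _ => And.right⟩

theorem card_filter_iterate_mem_le {k : ℕ} (hk : k ≤ minimalPeriod b x) (E : Finset α) :
    #{i ∈ range k | b^[i] x ∈ E} ≤ #E := by
  refine card_le_card_of_injOn (fun i => b^[i] x) (fun i hi => (mem_filter.1 hi).2) ?_
  refine iterate_injOn_Iio_minimalPeriod.mono fun i hi => ?_
  exact (mem_range.1 (mem_filter.1 hi).1).trans_le hk

omit [DecidableEq α] in
theorem rich_of_le_minimalPeriod (hxy : x ≠ y) (hx : x ∈ periodicPts b) (hy : y ∈ periodicPts b)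
    (hhx : 4 * h ≤ minimalPeriod b x) (hhy : 4 * h ≤ minimalPeriod b y) : Rich b h x y := by
  classical
  induction h with
  | zero => exact ⟨[], rfl, List.nodup_nil, by simp⟩
  | succ h ih =>
    obtain ⟨l, hlen, hnodup, horbit⟩ := ih (by omega) (by omega)
    set E := (endpoints l).toFinset with hE
    have hcardE : #E ≤ 2 * h := by
      rw [← hlen, ← length_endpoints]
      exact List.toFinset_card_le _
    -- Each state of `E` excludes at most one index for `x` and one for `y`.
    have hexcluded : #({i ∈ range (4 * (h + 1)) | b^[i] x ∈ E} ∪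
        {i ∈ range (4 * (h + 1)) | b^[i] y ∈ E}) < #(range (4 * (h + 1))) := by
      refine (card_union_le _ _).trans_lt ?_
      rw [card_range]
      linarith [card_filter_iterate_mem_le hhx E, card_filter_iterate_mem_le hhy E]
    obtain ⟨i, hi, hgood⟩ := exists_mem_notMem_of_card_lt_card hexcluded
    simp only [mem_union, mem_filter, hi, true_and, hE, List.mem_toFinset, not_or] at hgood
    have hne : b^[i] x ≠ b^[i] y := ((bijOn_periodicPts b).iterate i).injOn.ne hx hy hxy
    refine ⟨(b^[i] x, b^[i] y) :: l, by simp [hlen], ?_, ?_⟩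
    · rw [(endpoints_cons_perm _ _).nodup_iff]
      simp [hgood, hnodup, hne]
    · rintro p (_ | ⟨_, hp⟩)
      exacts [⟨i, rfl⟩, horbit p hp]

end PairLists

theorem iterate_card_mem_periodicPts {α : Type*} [Fintype α] (b : α → α) (x : α) :
    b^[Fintype.card α] x ∈ periodicPts b := by
  obtain ⟨i, hi, j, hj, hne, heq⟩ := exists_ne_map_eq_of_card_lt_of_maps_to
    (s := range (Fintype.card α + 1)) (t := univ) (f := fun i => b^[i] x)
    (by simp) (fun _ _ => mem_univ _)
  wlog hij : i < j generalizing i j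
  · exact this j hj i hi hne.symm heq.symm (by omega)
  have hperiodic : b^[i] x ∈ periodicPts b := by
    refine mk_mem_periodicPts (Nat.sub_pos_of_lt hij) ?_
    change b^[j - i] (b^[i] x) = b^[i] x
    rw [← iterate_add_apply, Nat.sub_add_cancel hij.le]
    exact heq.symm
  have hle : i ≤ Fintype.card α := Nat.lt_succ_iff.1 (mem_range.1 hi)
  rw [← Nat.sub_add_cancel hle, iterate_add_apply]
  exact ((bijOn_periodicPts b).iterate _).mapsTo hperiodic

section Sparse

variable {α : Type*} [DecidableEq α] {a b : α → α} {h H c : ℕ} {S V : Finset α} {x y : α}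

/-- Every set of at most `H` states spans at most as many arrows of `a` and `b` as it has
states. This is the event on which every pair of states can be moved to a rich pair. -/
def LocallySparse (a b : α → α) (H : ℕ) : Prop :=
  ∀ V : Finset α, #V ≤ H → #(internal a V) + #(internal b V) ≤ #V

-- A collision closes up `V` without a new `b`-exit, so the arrow `x → a x` would be one too many.
theorem LocallySparse.fresh (hab : LocallySparse a b H) (hcard : #V + h ≤ H)
    (hS : S ⊆ internal a V) (hexits : #(exits b V) ≤ #S) (hxV : x ∈ V) (hxS : x ∉ S) :
    Fresh b h V (a x) := by
  by_contra hfresh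
  obtain ⟨W, hVW, haxW, hcardW, hexitsW⟩ := exists_superset_of_not_fresh hfresh
  have hSW : insert x S ⊆ internal a W := by
    refine insert_subset (mem_filter.2 ⟨hVW hxV, haxW⟩) fun z hz => ?_
    obtain ⟨hzV, hazV⟩ := mem_filter.1 (hS hz)
    exact mem_filter.2 ⟨hVW hzV, hVW hazV⟩
  have hintA : #S + 1 ≤ #(internal a W) := card_insert_of_notMem hxS ▸ card_le_card hSW
  have hintB : #(internal b W) + #(exits b W) = #W := card_internal_add_card_exits
  have := card_le_card hexitsW
  have := hab W (hcardW.trans hcard)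
  omega

theorem LocallySparse.rich_map (hab : LocallySparse a b H) (hh : 0 < h) (hV : exits b V = ∅)
    (hcard : #V + 2 * h ≤ H) (hx : x ∈ V) (hy : y ∈ V) (hxy : x ≠ y) : Rich b h (a x) (a y) := by
  have hax : Fresh b h V (a x) :=
    hab.fresh (S := ∅) (by omega) (empty_subset _) (by simp [hV]) hx (notMem_empty x)
  have hcard' : #(V ∪ orbitPrefix b h (a x)) ≤ #V + h :=
    (card_union_le _ _).trans (Nat.add_le_add_left card_orbitPrefix_le _)
  have hax_mem : {x} ⊆ internal a (V ∪ orbitPrefix b h (a x)) := singleton_subset_iff.2 <|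
    mem_filter.2 ⟨mem_union_left _ hx, mem_union_right _ (self_mem_orbitPrefix hh)⟩
  have hexits : #(exits b (V ∪ orbitPrefix b h (a x))) ≤ #{x} := by
    simpa [hV] using card_exits_union_orbitPrefix_le (b := b) (V := V) (j := h) (v := a x)
  have hay : Fresh b h (V ∪ orbitPrefix b h (a x)) (a y) :=
    hab.fresh (by omega) hax_mem hexits (mem_union_left _ hy) (by simpa using hxy.symm)
  exact FreshPair.rich ⟨hax, hay⟩

-- If the orbit of `a y` collides, the arrow at `y` is used up, and the one at `b^[c] y` cannot be
-- superfluous as well.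
theorem LocallySparse.rich_map_or_rich_map_iterate (hab : LocallySparse a b H) (hh : 0 < h)
    (hV : exits b V = ∅) (hcard : #V + 3 * h + c + 1 ≤ H) (hx : x ∈ V) (hxy : x ≠ y)
    (hxcy : x ≠ b^[c] y) (hycy : y ≠ b^[c] y) :
    Rich b h (a x) (a y) ∨ Rich b h (a x) (a (b^[c] y)) := by
  have hax : Fresh b h V (a x) :=
    hab.fresh (S := ∅) (by omega) (empty_subset _) (by simp [hV]) hx (notMem_empty x)
  refine or_iff_not_imp_left.2 fun hnot => ?_
  have hnotfresh : ¬Fresh b h (V ∪ orbitPrefix b h (a x)) (a y) := fun hay =>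
    hnot (FreshPair.rich ⟨hax, hay⟩)
  obtain ⟨W, hVW, hayW, hcardW, hexitsW⟩ := exists_superset_of_not_fresh hnotfresh
  set W' := W ∪ orbitPrefix b (c + 1) y
  have hVW' : V ∪ orbitPrefix b h (a x) ⊆ W' := hVW.trans subset_union_left
  have hcard' : #W' + h ≤ H := by
    have h₁ : #(V ∪ orbitPrefix b h (a x)) ≤ #V + h :=
      (card_union_le _ _).trans (Nat.add_le_add_left card_orbitPrefix_le _)
    have h₂ : #W' ≤ #W + (c + 1) :=
      (card_union_le _ _).trans (Nat.add_le_add_left card_orbitPrefix_le _)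
    omega
  have hexits : #(exits b W') ≤ #{x, y} := by
    have h₁ : #(exits b (V ∪ orbitPrefix b h (a x))) ≤ 1 := by
      simpa [hV] using card_exits_union_orbitPrefix_le (b := b) (V := V) (j := h) (v := a x)
    have h₂ : #(exits b W') ≤ #(exits b W) + 1 := card_exits_union_orbitPrefix_le
    have h₃ := card_le_card hexitsW
    rw [card_pair hxy]
    omega
  have hinternal : {x, y} ⊆ internal a W' := by
    refine insert_subset (mem_filter.2 ⟨hVW' (mem_union_left _ hx), hVW' ?_⟩) <|
      singleton_subset_iff.2 <| mem_filter.2 ⟨mem_union_right _ ?_, mem_union_left _ hayW⟩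
    · exact mem_union_right _ (self_mem_orbitPrefix hh)
    · exact self_mem_orbitPrefix c.succ_pos
  have hfresh : Fresh b h W' (a (b^[c] y)) :=
    hab.fresh hcard' hinternal hexits (mem_union_right _ (iterate_mem_orbitPrefix c.lt_succ_self))
      (by simp [hxcy.symm, hycy.symm])
  exact FreshPair.rich ⟨hax, hfresh.mono hVW'⟩

theorem LocallySparse.mergeable_of_minimalPeriod_le (hab : LocallySparse a b (11 * h)) (hh : 0 < h)
    (hrich : ∀ x y, Rich b h x y → Mergeable (automaton a b) x y) (hxy : x ≠ y)
    (hx : x ∈ periodicPts b) (hy : y ∈ periodicPts b)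
    (hle : minimalPeriod b x ≤ minimalPeriod b y) : Mergeable (automaton a b) x y := by
  rcases le_or_gt (4 * h) (minimalPeriod b x) with hlong | hshortx
  · exact hrich x y (rich_of_le_minimalPeriod hxy hx hy hlong (hlong.trans hle))
  set c := minimalPeriod b x
  have hcpos : 0 < c := minimalPeriod_pos_of_mem_periodicPts hx
  have hcardx : #(orbitPrefix b c x) ≤ c := card_orbitPrefix_le
  have hexitsx : exits b (orbitPrefix b c x) = ∅ := exits_orbitPrefix_minimalPeriod hx
  rcases lt_or_ge (minimalPeriod b y) (4 * h) with hshorty | hlongy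
  · refine .of_left (hrich _ _ ?_)
    have hcardy : #(orbitPrefix b (minimalPeriod b y) y) ≤ minimalPeriod b y := card_orbitPrefix_le
    have hposy : 0 < minimalPeriod b y := minimalPeriod_pos_of_mem_periodicPts hy
    refine hab.rich_map (V := orbitPrefix b c x ∪ orbitPrefix b (minimalPeriod b y) y) hh ?_ ?_
      (mem_union_left _ (self_mem_orbitPrefix hcpos))
      (mem_union_right _ (self_mem_orbitPrefix hposy)) hxy
    · have h := exits_union_subset (f := b) (V := orbitPrefix b c x)
        (W := orbitPrefix b (minimalPeriod b y) y)
      rwa [hexitsx, exits_orbitPrefix_minimalPeriod hy, empty_union, subset_empty] at h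
    · have := card_union_le (orbitPrefix b c x) (orbitPrefix b (minimalPeriod b y) y)
      omega
  -- `b^[c]` fixes `x` and moves `y`, so merging `x` with `b^[c] y` also merges `x` with `y`.
  · have hcx : b^[c] x = x := iterate_minimalPeriod
    have hxcy : x ≠ b^[c] y := by
      rw [← hcx]
      exact ((bijOn_periodicPts b).iterate c).injOn.ne hx hy hxy
    have hycy : y ≠ b^[c] y := fun heq =>
      absurd (IsPeriodicPt.minimalPeriod_le hcpos heq.symm) (by omega)
    rcases hab.rich_map_or_rich_map_iterate hh hexitsx (by omega) (self_mem_orbitPrefix hcpos)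
      hxy hxcy hycy with hr | hr
    · exact .of_left (hrich _ _ hr)
    · refine .of_iterate c ?_
      rw [hcx]
      exact .of_left (hrich _ _ hr)

theorem LocallySparse.mergeable [Finite α] (hab : LocallySparse a b (11 * h)) (hh : 0 < h)
    (hrich : ∀ x y, Rich b h x y → Mergeable (automaton a b) x y) (x y : α) :
    Mergeable (automaton a b) x y := by
  have := Fintype.ofFinite α
  refine .of_iterate (Fintype.card α) ?_
  have hx := iterate_card_mem_periodicPts b x
  have hy := iterate_card_mem_periodicPts b y
  by_cases hxy : b^[Fintype.card α] x = b^[Fintype.card α] y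
  · exact hxy ▸ .refl _
  rcases le_total (minimalPeriod b (b^[Fintype.card α] x)) (minimalPeriod b (b^[Fintype.card α] y))
    with hle | hle
  · exact hab.mergeable_of_minimalPeriod_le hh hrich hxy hx hy hle
  · exact (hab.mergeable_of_minimalPeriod_le hh hrich (Ne.symm hxy) hy hx hle).symm

end Sparse

section Exposure

variable {α : Type*} [DecidableEq α] {b f : α → α} {h T M N : ℕ} {R Z : Finset α}
  {l l₁ l₂ : List (α × α)} {x y u v : α} {κ θ : ℝ}

theorem mergeable_of_mergeable_iterate (i : ℕ) {a : α → α} (hx : x ∈ R) (hy : y ∈ R)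
    (h : Mergeable (automaton (R.piecewise f a) b) (b^[i] (f x)) (b^[i] (f y))) :
    Mergeable (automaton (R.piecewise f a) b) x y := by
  refine .of_left (.of_iterate i ?_)
  rwa [piecewise_eq_of_mem _ _ _ hx, piecewise_eq_of_mem _ _ _ hy]

/-- The pairs of `l` have distinct entries, none of which lies in the set `R` of states at which the
random map has been revealed. -/
def Unrevealed (R : Finset α) (l : List (α × α)) : Prop :=
  (endpoints l).Nodup ∧ ∀ z ∈ endpoints l, z ∉ R

theorem unrevealed_cons (hl : Unrevealed R ((x, y) :: l)) :
    x ≠ y ∧ x ∉ R ∧ y ∉ R ∧ Unrevealed (insert y (insert x R)) l := by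
  obtain ⟨hnodup, hR⟩ := hl
  have hperm := endpoints_cons_perm (x, y) l
  rw [hperm.nodup_iff, List.nodup_cons, List.nodup_cons, List.mem_cons, not_or] at hnodup
  simp only [hperm.mem_iff, List.forall_mem_cons] at hR
  obtain ⟨⟨hxy, hxl⟩, hyl, hnodup⟩ := hnodup
  refine ⟨hxy, hR.1, hR.2.1, hnodup, fun z hz hmem => ?_⟩
  rcases mem_insert.1 hmem with rfl | hmem
  · exact hyl hz
  rcases mem_insert.1 hmem with rfl | hmem
  exacts [hxl hz, hR.2.2 z hz hmem]

theorem Unrevealed.append_orbitPairs (hl : Unrevealed R l)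
    (huv : FreshPair b h (R ∪ (endpoints l).toFinset) u v) :
    Unrevealed R (l ++ orbitPairs b h u v) := by
  have hnew := huv.notMem
  simp only [mem_union, List.mem_toFinset, not_or] at hnew
  have hperm := endpoints_append_perm l (orbitPairs b h u v)
  refine ⟨?_, fun z hz => ?_⟩
  · rw [hperm.nodup_iff, List.nodup_append']
    exact ⟨hl.1, huv.nodup, fun z hz hz' => (hnew z hz').2 hz⟩
  · rcases List.mem_append.1 (hperm.mem_iff.1 hz) with hz | hz
    exacts [hl.2 z hz, (hnew z hz).1]

theorem card_union_endpoints_le :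
    #(insert y (insert x R) ∪ (endpoints l).toFinset) ≤ #R + 2 * l.length + 2 :=
  calc #(insert y (insert x R) ∪ (endpoints l).toFinset)
      ≤ #(insert y (insert x R)) + #(endpoints l).toFinset := card_union_le _ _
    _ ≤ (#R + 1 + 1) + 2 * l.length := by
        gcongr
        · exact (card_insert_le _ _).trans (Nat.succ_le_succ (card_insert_le _ _))
        · exact (List.toFinset_card_le _).trans_eq (length_endpoints l)
    _ = #R + 2 * l.length + 2 := by ring

variable [Fintype α]

/-- The conditional probability, given that a random map `a` agrees with `f` on the set `R` of
revealed states, that the automaton `(a, b)` merges no pair of `l`. -/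
noncomputable def unmergedProb (b : α → α) (l : List (α × α)) (R : Finset α) (f : α → α) : ℝ :=
  prob fun a : α → α => ∀ p ∈ l, ¬Mergeable (automaton (R.piecewise f a) b) p.1 p.2

theorem unmergedProb_le_one : unmergedProb b l R f ≤ 1 :=
  prob_le_one _

theorem unmergedProb_anti
    (hl : ∀ a, ∀ p ∈ l₁, Mergeable (automaton (R.piecewise f a) b) p.1 p.2 →
      ∃ q ∈ l₂, Mergeable (automaton (R.piecewise f a) b) q.1 q.2) :
    unmergedProb b l₂ R f ≤ unmergedProb b l₁ R f :=
  prob_mono fun a hnone p hp hmerge =>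
    let ⟨q, hq, hq'⟩ := hl a p hp hmerge
    hnone q hq hq'

theorem unmergedProb_eq_expect_reveal [Nonempty α] (hx : x ∉ R) :
    unmergedProb b l R f = 𝔼 u, unmergedProb b l (insert x R) (update f x u) := by
  have hreveal (a : α → α) (u : α) :
      R.piecewise f (update a x u) = (insert x R).piecewise (update f x u) a := by
    ext z
    by_cases hz : z = x
    · subst hz; simp [hx]
    · simp [Finset.piecewise, hz]
  simp only [unmergedProb, ← hreveal]
  exact prob_eq_expect_update x _

theorem unmergedProb_cons_eq_zero (hx : x ∈ R) (hy : y ∈ R) (i : ℕ)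
    (hxy : b^[i] (f x) = b^[i] (f y)) : unmergedProb b ((x, y) :: l) R f = 0 :=
  prob_eq_zero fun _ hnone => hnone _ List.mem_cons_self <|
    mergeable_of_mergeable_iterate i hx hy (hxy ▸ .refl _)

theorem unmergedProb_cons_le :
    unmergedProb b ((x, y) :: l) R f ≤ unmergedProb b l R f :=
  unmergedProb_anti fun _ p hp hmerge => ⟨p, List.mem_cons_of_mem _ hp, hmerge⟩

theorem unmergedProb_cons_le_append (hx : x ∈ R) (hy : y ∈ R) (h : ℕ) :
    unmergedProb b ((x, y) :: l) R f ≤ unmergedProb b (l ++ orbitPairs b h (f x) (f y)) R f := by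
  refine unmergedProb_anti fun a p hp hmerge => ?_
  rcases List.mem_append.1 hp with hp | hp
  · exact ⟨p, List.mem_cons_of_mem _ hp, hmerge⟩
  · obtain ⟨i, -, rfl⟩ := mem_orbitPairs.1 hp
    exact ⟨_, List.mem_cons_self, mergeable_of_mergeable_iterate i hx hy hmerge⟩

open scoped Classical in
theorem unmergedProb_cons_le_of_forall {A : ℝ} (hA : 0 ≤ A) (hθ : 0 ≤ θ) (hx : x ∈ R) (hy : y ∈ R)
    (hl : Unrevealed R l)
    (ih : ∀ l', Unrevealed R l' → l'.length ≤ l.length + h →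
      unmergedProb b l' R f ≤ A + θ ^ l'.length) :
    unmergedProb b ((x, y) :: l) R f ≤
      (if b^[N] (f x) ≠ b^[N] (f y) then 1 else 0) * A +
        ((if ¬FreshPair b h (R ∪ (endpoints l).toFinset) (f x) (f y) then 1 else 0) * θ ^ l.length
          + θ ^ (l.length + h)) := by
  have hθl := pow_nonneg hθ l.length
  have hθlh := pow_nonneg hθ (l.length + h)
  by_cases hmeet : b^[N] (f x) = b^[N] (f y)
  · rw [unmergedProb_cons_eq_zero hx hy N hmeet]
    split_ifs <;> linarith
  by_cases hfresh : FreshPair b h (R ∪ (endpoints l).toFinset) (f x) (f y)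
  · have hlen : (l ++ orbitPairs b h (f x) (f y)).length = l.length + h := by
      rw [List.length_append, length_orbitPairs]
    have hgrow := ih _ (hl.append_orbitPairs hfresh) hlen.le
    rw [hlen] at hgrow
    simpa [hmeet, hfresh] using (unmergedProb_cons_le_append hx hy h).trans hgrow
  · have hdrop := (unmergedProb_cons_le (x := x) (y := y)).trans (ih l hl (Nat.le_add_right _ _))
    simp only [ne_eq, hmeet, hfresh, not_false_eq_true, if_true]
    linarith

/-- Exposing `a` pair by pair: revealing `a` at the first pair of `l` either merges it under powers
of `b`, or, if the images are fresh, replaces it by `h` new pairs, or loses it. The hypotheses make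
`κ ^ T + θ ^ l.length` a supermartingale for this exploration. -/
theorem unmergedProb_le [Nonempty α] (hκ : 0 ≤ κ) (hθ : 0 ≤ θ)
    (hcollide : prob (fun p : α × α => b^[N] p.1 ≠ b^[N] p.2) ≤ κ)
    (hfresh : ∀ Z : Finset α, #Z ≤ M →
      prob (fun p : α × α => ¬FreshPair b h Z p.1 p.2) ≤ θ - θ ^ h)
    (hl : Unrevealed R l) (hcard : #R + 2 * l.length + 2 * h * T ≤ M) :
    unmergedProb b l R f ≤ κ ^ T + θ ^ l.length := by
  classical
  induction T generalizing l R f with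
  | zero => exact unmergedProb_le_one.trans (by rw [pow_zero]; linarith [pow_nonneg hθ l.length])
  | succ T ih =>
    rcases l with _ | ⟨⟨x, y⟩, l⟩
    · exact unmergedProb_le_one.trans
        (by rw [List.length_nil, pow_zero]; linarith [pow_nonneg hκ (T + 1)])
    obtain ⟨hxy, hx, hy, hl⟩ := unrevealed_cons hl
    rw [List.length_cons, mul_add_one, mul_add_one] at hcard
    set R' := insert y (insert x R)
    set Z := R' ∪ (endpoints l).toFinset
    set k := l.length
    have hcardR' : #R' ≤ #R + 2 :=
      (card_insert_le _ _).trans (Nat.succ_le_succ (card_insert_le _ _))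
    have hcardZ : #Z ≤ M := card_union_endpoints_le.trans (by omega)
    have hgrow (u v : α) (l' : List (α × α)) (hl' : Unrevealed R' l') (hlen : l'.length ≤ k + h) :
        unmergedProb b l' R' (update (update f x u) y v) ≤ κ ^ T + θ ^ l'.length :=
      ih hl' (by omega)
    calc unmergedProb b ((x, y) :: l) R f
        = 𝔼 u, 𝔼 v, unmergedProb b ((x, y) :: l) R' (update (update f x u) y v) := by
          rw [unmergedProb_eq_expect_reveal hx]
          refine expect_congr rfl fun u _ => unmergedProb_eq_expect_reveal ?_
          simp [hxy.symm, hy]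
      _ ≤ 𝔼 u, 𝔼 v, ((if b^[N] u ≠ b^[N] v then 1 else 0) * κ ^ T +
          ((if ¬FreshPair b h Z u v then 1 else 0) * θ ^ k + θ ^ (k + h))) := by
          refine expect_le_expect fun u _ => expect_le_expect fun v _ => ?_
          have hstep := unmergedProb_cons_le_of_forall (N := N) (pow_nonneg hκ T) hθ
            (mem_insert_of_mem (mem_insert_self x R)) (mem_insert_self y _) hl (hgrow u v)
          simpa only [update_self, update_of_ne hxy] using hstep
      _ = prob (fun p : α × α => b^[N] p.1 ≠ b^[N] p.2) * κ ^ T +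
          (prob (fun p : α × α => ¬FreshPair b h Z p.1 p.2) * θ ^ k + θ ^ (k + h)) := by
          rw [prob_eq_expect, prob_eq_expect]
          simp only [expect_add_distrib, ← expect_mul, Fintype.expect_const, ← univ_product_univ,
            expect_product]
      _ ≤ κ * κ ^ T + ((θ - θ ^ h) * θ ^ k + θ ^ (k + h)) := by
          gcongr
          exact hfresh Z hcardZ
      _ = κ ^ (T + 1) + θ ^ (k + 1) := by ring

theorem prob_not_mergeable_le_of_rich [Nonempty α] (hκ : 0 ≤ κ) (hθ : 0 ≤ θ)
    (hcollide : prob (fun p : α × α => b^[N] p.1 ≠ b^[N] p.2) ≤ κ)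
    (hfresh : ∀ Z : Finset α, #Z ≤ 2 * h + 2 * h * T →
      prob (fun p : α × α => ¬FreshPair b h Z p.1 p.2) ≤ θ - θ ^ h)
    (hxy : Rich b h x y) :
    prob (fun a : α → α => ¬Mergeable (automaton a b) x y) ≤ κ ^ T + θ ^ h := by
  obtain ⟨l, rfl, hnodup, horbit⟩ := hxy
  calc prob (fun a : α → α => ¬Mergeable (automaton a b) x y)
      ≤ unmergedProb b l ∅ id := by
        refine prob_mono fun a hxy p hp hmerge => hxy ?_
        obtain ⟨i, rfl⟩ := horbit p hp
        rw [piecewise_empty] at hmerge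
        exact .of_iterate i hmerge
    _ ≤ κ ^ T + θ ^ l.length :=
        unmergedProb_le hκ hθ hcollide hfresh ⟨hnodup, fun z _ => notMem_empty z⟩ (by simp)

end Exposure

section Internal

theorem choose_mul_div_pow_le (n k j : ℕ) {c : ℝ} (hc : 0 ≤ c) :
    n.choose k * (c / n) ^ (k + j) ≤ c ^ (k + j) / n ^ j := by
  have hmul : n * (c / n) ≤ c := by
    rcases n.eq_zero_or_pos with rfl | hn
    · simpa using hc
    · rw [mul_div_cancel₀ _ (by positivity)]
  calc n.choose k * (c / n) ^ (k + j) ≤ n ^ k * (c / n) ^ (k + j) := by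
        gcongr
        exact mod_cast Nat.choose_le_pow n k
    _ = (n * (c / n)) ^ k * (c / n) ^ j := by rw [pow_add, mul_pow, mul_assoc]
    _ ≤ c ^ k * (c / n) ^ j := by gcongr
    _ = c ^ (k + j) / n ^ j := by rw [div_pow, pow_add, mul_div_assoc]

variable {α : Type*} [Fintype α] [DecidableEq α]

theorem prob_forall_map_mem [Nonempty α] (F V : Finset α) :
    prob (fun f : α → α => ∀ x ∈ F, f x ∈ V) = (#V / Fintype.card α : ℝ) ^ #F := by
  rw [prob_forall_mem_of_mem F fun _ => V, prod_const]

omit [DecidableEq α] in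
theorem card_div_card_le_one (V : Finset α) : (#V / Fintype.card α : ℝ) ≤ 1 :=
  div_le_one_of_le₀ (mod_cast card_le_univ V) (Nat.cast_nonneg _)

theorem prob_card_lt_internal_le [Nonempty α] (V : Finset α) :
    prob (fun ab : (α → α) × (α → α) => #V < #(internal ab.1 V) + #(internal ab.2 V)) ≤
      4 ^ #V * (#V / Fintype.card α : ℝ) ^ (#V + 1) :=
  calc prob (fun ab : (α → α) × (α → α) => #V < #(internal ab.1 V) + #(internal ab.2 V))
      ≤ prob (fun ab : (α → α) × (α → α) => ∃ S ∈ {S ∈ V.powerset ×ˢ V.powerset |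
          #V < #S.1 + #S.2}, (∀ x ∈ S.1, ab.1 x ∈ V) ∧ ∀ x ∈ S.2, ab.2 x ∈ V) := by
        refine prob_mono fun ab hlt => ⟨(internal ab.1 V, internal ab.2 V), ?_, ?_, ?_⟩
        · simpa [internal] using hlt
        · exact fun x hx => (mem_filter.1 hx).2
        · exact fun x hx => (mem_filter.1 hx).2
    _ ≤ ∑ S ∈ V.powerset ×ˢ V.powerset with #V < #S.1 + #S.2,
          (#V / Fintype.card α : ℝ) ^ (#V + 1) := by
        refine (prob_exists_le _ _).trans (sum_le_sum fun S hS => ?_)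
        rw [prob_prod_and (fun a : α → α => ∀ x ∈ S.1, a x ∈ V) fun b : α → α => ∀ x ∈ S.2, b x ∈ V,
          prob_forall_map_mem, prob_forall_map_mem, ← pow_add]
        exact pow_le_pow_of_le_one (by positivity) (card_div_card_le_one V) (mem_filter.1 hS).2
    _ ≤ ∑ _S ∈ V.powerset ×ˢ V.powerset, (#V / Fintype.card α : ℝ) ^ (#V + 1) :=
        sum_le_sum_of_subset_of_nonneg (filter_subset _ _) fun _ _ _ => by positivity
    _ = 4 ^ #V * (#V / Fintype.card α : ℝ) ^ (#V + 1) := by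
        rw [sum_const, card_product, card_powerset, ← mul_pow, nsmul_eq_mul]
        norm_num

theorem prob_not_locallySparse_le [Nonempty α] (H : ℕ) :
    prob (fun ab : (α → α) × (α → α) => ¬LocallySparse ab.1 ab.2 H) ≤
      (∑ k ∈ range (H + 1), 4 ^ k * (k : ℝ) ^ (k + 1)) / Fintype.card α :=
  calc prob (fun ab : (α → α) × (α → α) => ¬LocallySparse ab.1 ab.2 H)
      ≤ prob (fun ab : (α → α) × (α → α) => ∃ V : Finset α, #V ∈ range (H + 1) ∧
          #V < #(internal ab.1 V) + #(internal ab.2 V)) := by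
        refine prob_mono fun ab hab => ?_
        simpa [LocallySparse, Nat.lt_succ_iff] using hab
    _ ≤ ∑ k ∈ range (H + 1),
          (Fintype.card α).choose k * (4 ^ k * (k / Fintype.card α : ℝ) ^ (k + 1)) :=
        prob_exists_finset_le (p := fun k => 4 ^ k * (k / Fintype.card α : ℝ) ^ (k + 1)) _
          fun V _ => prob_card_lt_internal_le V
    _ ≤ ∑ k ∈ range (H + 1), 4 ^ k * ((k : ℝ) ^ (k + 1) / Fintype.card α ^ 1) := by
        refine sum_le_sum fun k _ => ?_
        rw [mul_left_comm]
        gcongr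
        exact choose_mul_div_pow_le _ k 1 k.cast_nonneg
    _ = (∑ k ∈ range (H + 1), 4 ^ k * (k : ℝ) ^ (k + 1)) / Fintype.card α := by
        simp only [sum_div, pow_one, mul_div_assoc]

end Internal

section ShortOrbits

variable {α : Type*} [Fintype α] [DecidableEq α] {b : α → α} {h : ℕ} {u v : α}

omit [Fintype α] in
theorem exists_closed_of_not_fresh (hu : ¬Fresh b h ∅ u) :
    ∃ V, u ∈ V ∧ #V ≤ h ∧ ∀ x ∈ V, b x ∈ V := by
  obtain ⟨V, -, huV, hcard, hexits⟩ := exists_superset_of_not_fresh hu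
  refine ⟨V, huV, by simpa using hcard, fun x hx => ?_⟩
  by_contra hbx
  exact notMem_empty x (mem_filter.1 (hexits (mem_filter.2 ⟨hx, hbx⟩))).1

theorem expect_sq_prob_not_fresh_le [Nonempty α] (h : ℕ) :
    𝔼 b : α → α, prob (fun u => ¬Fresh b h ∅ u) ^ 2 ≤
      (∑ k ∈ range (2 * h + 1), (k : ℝ) ^ (k + 2)) / Fintype.card α ^ 2 :=
  calc 𝔼 b : α → α, prob (fun u => ¬Fresh b h ∅ u) ^ 2
      = prob (fun x : (α × α) × (α → α) => ¬Fresh x.2 h ∅ x.1.1 ∧ ¬Fresh x.2 h ∅ x.1.2) := by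
        rw [prob_prod fun (p : α × α) (b : α → α) => ¬Fresh b h ∅ p.1 ∧ ¬Fresh b h ∅ p.2]
        refine expect_congr rfl fun b _ => ?_
        rw [sq, prob_prod_and (fun u => ¬Fresh b h ∅ u) fun u => ¬Fresh b h ∅ u]
    _ ≤ prob (fun x : (α × α) × (α → α) => ∃ V : Finset α, #V ∈ range (2 * h + 1) ∧
          (x.1.1 ∈ V ∧ x.1.2 ∈ V) ∧ ∀ z ∈ V, x.2 z ∈ V) := by
        refine prob_mono fun ⟨⟨u, v⟩, b⟩ ⟨hu, hv⟩ => ?_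
        obtain ⟨U, huU, hcardU, hU⟩ := exists_closed_of_not_fresh hu
        obtain ⟨V, hvV, hcardV, hV⟩ := exists_closed_of_not_fresh hv
        have := card_union_le U V
        exact ⟨U ∪ V, mem_range.2 (by omega), ⟨mem_union_left _ huU, mem_union_right _ hvV⟩,
          fun z hz => mem_union.2 ((mem_union.1 hz).imp (hU z) (hV z))⟩
    _ ≤ ∑ k ∈ range (2 * h + 1),
          (Fintype.card α).choose k * (k / Fintype.card α : ℝ) ^ (k + 2) := by
        refine prob_exists_finset_le (p := fun k => (k / Fintype.card α : ℝ) ^ (k + 2)) _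
          fun V _ => ?_
        rw [prob_prod_and (fun p : α × α => p.1 ∈ V ∧ p.2 ∈ V) fun b : α → α => ∀ z ∈ V, b z ∈ V,
          prob_prod_and (· ∈ V) (· ∈ V), prob_mem, prob_forall_map_mem, pow_add, sq, mul_comm]
    _ ≤ (∑ k ∈ range (2 * h + 1), (k : ℝ) ^ (k + 2)) / Fintype.card α ^ 2 := by
        rw [sum_div]
        exact sum_le_sum fun k _ => choose_mul_div_pow_le _ k 2 k.cast_nonneg

theorem prob_one_div_sqrt_lt_prob_not_fresh_le [Nonempty α] (h : ℕ) :
    prob (fun b : α → α => 1 / √(Fintype.card α) < prob fun u => ¬Fresh b h ∅ u) ≤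
      (∑ k ∈ range (2 * h + 1), (k : ℝ) ^ (k + 2)) / Fintype.card α := by
  have hn : (0 : ℝ) < Fintype.card α := Nat.cast_pos.2 Fintype.card_pos
  calc prob (fun b : α → α => 1 / √(Fintype.card α) < prob fun u => ¬Fresh b h ∅ u)
      ≤ prob (fun b : α → α => 1 / (Fintype.card α : ℝ) ≤ prob (fun u => ¬Fresh b h ∅ u) ^ 2) := by
        refine prob_mono fun b hb => ?_
        calc 1 / (Fintype.card α : ℝ) = (1 / √(Fintype.card α)) ^ 2 := by
              rw [div_pow, one_pow, sq_sqrt hn.le]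
          _ ≤ prob (fun u => ¬Fresh b h ∅ u) ^ 2 := by gcongr
    _ ≤ (∑ k ∈ range (2 * h + 1), (k : ℝ) ^ (k + 2)) / Fintype.card α := by
        refine prob_le_of_expect_le (fun b => sq_nonneg _) (by positivity) ?_
        refine (expect_sq_prob_not_fresh_le h).trans_eq ?_
        field_simp

end ShortOrbits

section Indegree

variable {α : Type*} [Fintype α] [DecidableEq α]

theorem prob_exists_le_card_preimage_le [Nonempty α] (r : ℕ) :
    prob (fun b : α → α => ∃ z, r ≤ #{x | b x = z}) ≤ Fintype.card α / r ! :=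
  calc prob (fun b : α → α => ∃ z, r ≤ #{x | b x = z})
      ≤ prob (fun b : α → α => ∃ z ∈ univ, ∃ V : Finset α, #V ∈ ({r} : Finset ℕ) ∧
          ∀ x ∈ V, b x ∈ ({z} : Finset α)) := by
        refine prob_mono fun b ⟨z, hz⟩ => ?_
        obtain ⟨V, hV, hcard⟩ := exists_subset_card_eq hz
        exact ⟨z, mem_univ z, V, mem_singleton.2 hcard, fun x hx =>
          mem_singleton.2 (mem_filter.1 (hV hx)).2⟩
    _ ≤ ∑ _z : α, (Fintype.card α).choose r * (1 / Fintype.card α : ℝ) ^ r := by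
        refine (prob_exists_le _ _).trans (sum_le_sum fun z _ => ?_)
        refine (prob_exists_finset_le (p := fun k => (1 / Fintype.card α : ℝ) ^ k) _
          fun V _ => ?_).trans_eq (sum_singleton _ r)
        rw [prob_forall_map_mem, card_singleton, Nat.cast_one]
    _ = Fintype.card α * ((Fintype.card α).choose r / Fintype.card α ^ r) := by
        rw [sum_const, card_univ, nsmul_eq_mul, one_div_pow, mul_one_div]
    _ ≤ Fintype.card α * (1 / r !) := by
        have hn : (0 : ℝ) < Fintype.card α := Nat.cast_pos.2 Fintype.card_pos
        refine mul_le_mul_of_nonneg_left ?_ hn.le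
        rw [div_le_iff₀ (by positivity), one_div_mul_eq_div]
        exact Nat.choose_le_pow_div r (Fintype.card α)
    _ = Fintype.card α / r ! := mul_one_div _ _

end Indegree

section Periodic

variable {α : Type*} [Fintype α] [DecidableEq α]

theorem descFactorial_le_pow_mul_exp (n k : ℕ) :
    (n.descFactorial k : ℝ) ≤ n ^ k * exp (-(k * (k - 1) / (2 * n))) := by
  rcases n.eq_zero_or_pos with rfl | hn
  · rcases k.eq_zero_or_pos with rfl | hk
    · simp
    · simp [Nat.descFactorial_of_lt hk, hk.ne']
  induction k with
  | zero => simp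
  | succ k ih =>
    have hfactor : ((n - k : ℕ) : ℝ) ≤ n * exp (-(k / n)) := by
      rcases le_or_gt k n with hk | hk
      · rw [Nat.cast_sub hk]
        calc (n - k : ℝ) = n * (1 - k / n) := by field_simp
          _ ≤ n * exp (-(k / n)) := by gcongr; exact one_sub_le_exp_neg _
      · rw [Nat.sub_eq_zero_of_le hk.le, Nat.cast_zero]
        positivity
    calc (n.descFactorial (k + 1) : ℝ) = (n - k : ℕ) * n.descFactorial k := by
          rw [Nat.descFactorial_succ, Nat.cast_mul]
      _ ≤ n * exp (-(k / n)) * (n ^ k * exp (-(k * (k - 1) / (2 * n)))) := by gcongr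
      _ = n ^ (k + 1) * exp (-((k + 1 : ℕ) * ((k + 1 : ℕ) - 1) / (2 * n))) := by
          rw [mul_mul_mul_comm, ← pow_succ', ← exp_add]
          congr 2
          push_cast
          field_simp
          ring

theorem prob_bijOn_le [Nonempty α] (V : Finset α) :
    prob (fun b : α → α => Set.BijOn b V V) ≤ (#V)! * (1 / Fintype.card α : ℝ) ^ #V :=
  calc prob (fun b : α → α => Set.BijOn b V V)
      ≤ prob (fun b : α → α => ∃ σ ∈ (univ : Finset (Equiv.Perm V)),
          ∀ x ∈ V, b x ∈ ({Equiv.Perm.ofSubtype σ x} : Finset α)) := by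
        refine prob_mono fun b hb => ⟨hb.equiv b, mem_univ _, fun x hx => ?_⟩
        rw [mem_singleton, Equiv.Perm.ofSubtype_apply_of_mem _ hx]
        rfl
    _ ≤ ∑ _σ : Equiv.Perm V, (1 / Fintype.card α : ℝ) ^ #V := by
        refine (prob_exists_le _ _).trans_eq (sum_congr rfl fun σ _ => ?_)
        rw [prob_forall_mem_of_mem V fun x => {Equiv.Perm.ofSubtype σ x}]
        simp only [card_singleton, Nat.cast_one, prod_const]
    _ = (#V)! * (1 / Fintype.card α : ℝ) ^ #V := by
        rw [sum_const, card_univ, Fintype.card_perm, Fintype.card_coe, nsmul_eq_mul]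

open scoped Classical in
/-- `Function.periodicPts b` as a `Finset`, for a self-map `b` of a finite type. -/
noncomputable def periodicFinset (b : α → α) : Finset α :=
  {x | x ∈ periodicPts b}

omit [DecidableEq α] in
theorem coe_periodicFinset (b : α → α) : (periodicFinset b : Set α) = periodicPts b := by
  ext; simp [periodicFinset]

theorem prob_lt_card_periodicFinset_le [Nonempty α] (m : ℕ) :
    prob (fun b : α → α => m < #(periodicFinset b)) ≤
      Fintype.card α * exp (-(m ^ 2 / (2 * Fintype.card α))) :=
  calc prob (fun b : α → α => m < #(periodicFinset b))
      ≤ prob (fun b : α → α => ∃ V : Finset α, #V ∈ Ioc m (Fintype.card α) ∧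
          Set.BijOn b V V) := by
        refine prob_mono fun b hm => ⟨periodicFinset b, mem_Ioc.2 ⟨hm, card_le_univ _⟩, ?_⟩
        rw [coe_periodicFinset]
        exact bijOn_periodicPts b
    _ ≤ ∑ k ∈ Ioc m (Fintype.card α),
          (Fintype.card α).choose k * (k ! * (1 / Fintype.card α : ℝ) ^ k) :=
        prob_exists_finset_le (p := fun k => k ! * (1 / Fintype.card α : ℝ) ^ k) _
          fun V _ => prob_bijOn_le V
    _ ≤ ∑ k ∈ Ioc m (Fintype.card α), exp (-(m ^ 2 / (2 * Fintype.card α))) := by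
        refine sum_le_sum fun k hk => ?_
        have : (0 : ℝ) < Fintype.card α := Nat.cast_pos.2 Fintype.card_pos
        have hmk : (m : ℝ) + 1 ≤ k := mod_cast (mem_Ioc.1 hk).1
        calc ((Fintype.card α).choose k * (k ! * (1 / Fintype.card α : ℝ) ^ k) : ℝ)
            = (Fintype.card α).descFactorial k / (Fintype.card α : ℝ) ^ k := by
              rw [Nat.descFactorial_eq_factorial_mul_choose, Nat.cast_mul, one_div_pow]
              ring
          _ ≤ exp (-(k * (k - 1) / (2 * Fintype.card α))) := by
              rw [div_le_iff₀' (by positivity)]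
              exact descFactorial_le_pow_mul_exp _ k
          _ ≤ exp (-(m ^ 2 / (2 * Fintype.card α))) := by
              gcongr
              nlinarith
    _ ≤ Fintype.card α * exp (-(m ^ 2 / (2 * Fintype.card α))) := by
        rw [sum_const, Nat.card_Ioc, nsmul_eq_mul]
        gcongr
        exact Nat.sub_le _ _

omit [DecidableEq α] in
theorem prob_iterate_ne_le [Nonempty α] {b : α → α} {m : ℕ} (hm : #(periodicFinset b) ≤ m) :
    prob (fun p : α × α => b^[Fintype.card α] p.1 ≠ b^[Fintype.card α] p.2) ≤ 1 - (m : ℝ)⁻¹ := by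
  refine prob_ne_le (fun x => ?_) hm
  rw [← mem_coe, coe_periodicFinset]
  exact iterate_card_mem_periodicPts b x

end Periodic

section FreshProbability

variable {α : Type*} [Fintype α] [DecidableEq α] {b : α → α} {h Δ : ℕ} {s : ℝ}

theorem card_iterate_preimage_le (hΔ : ∀ z, #{x | b x = z} ≤ Δ) (i : ℕ) (Z : Finset α) :
    #{x | b^[i] x ∈ Z} ≤ Δ ^ i * #Z := by
  induction i generalizing Z with
  | zero =>
    rw [pow_zero, one_mul]
    exact card_le_card fun x hx => (mem_filter.1 hx).2
  | succ i ih =>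
    have hpre : #{x | b x ∈ Z} ≤ Δ * #Z := by
      refine card_le_mul_card_image_of_maps_to (f := b) (fun x hx => (mem_filter.1 hx).2) Δ ?_
      exact fun z _ => (card_le_card (filter_subset_filter _ (filter_subset _ _))).trans (hΔ z)
    calc #{x | b^[i + 1] x ∈ Z} = #{x | b^[i] x ∈ ({x | b x ∈ Z} : Finset α)} := by
          simp only [iterate_succ_apply', mem_filter, mem_univ, true_and]
      _ ≤ Δ ^ i * (Δ * #Z) := (ih _).trans (Nat.mul_le_mul_left _ hpre)
      _ = Δ ^ (i + 1) * #Z := by ring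

theorem prob_exists_iterate_mem_le (hΔ : ∀ z, #{x | b x = z} ≤ Δ) (hΔ₁ : 1 ≤ Δ) (h : ℕ)
    (Z : Finset α) :
    prob (fun x => ∃ i ∈ range h, b^[i] x ∈ Z) ≤ h * Δ ^ h * #Z / Fintype.card α :=
  calc prob (fun x => ∃ i ∈ range h, b^[i] x ∈ Z)
      ≤ ∑ i ∈ range h, prob (fun x => b^[i] x ∈ Z) := prob_exists_le _ _
    _ ≤ ∑ _i ∈ range h, (Δ ^ h * #Z / Fintype.card α : ℝ) := by
        refine sum_le_sum fun i hi => ?_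
        rw [prob_eq_card_div]
        gcongr
        exact mod_cast (card_iterate_preimage_le hΔ i Z).trans
          (Nat.mul_le_mul_right _ (Nat.pow_le_pow_right hΔ₁ (mem_range.1 hi).le))
    _ = h * Δ ^ h * #Z / Fintype.card α := by
        rw [sum_const, card_range, nsmul_eq_mul]
        ring

theorem prob_not_fresh_le (hs : prob (fun x => ¬Fresh b h ∅ x) ≤ s)
    (hΔ : ∀ z, #{x | b x = z} ≤ Δ) (hΔ₁ : 1 ≤ Δ) (Z : Finset α) :
    prob (fun x => ¬Fresh b h Z x) ≤ s + h * Δ ^ h * #Z / Fintype.card α :=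
  calc prob (fun x => ¬Fresh b h Z x)
      ≤ prob (fun x => ¬Fresh b h ∅ x ∨ ∃ i ∈ range h, b^[i] x ∈ Z) := by
        refine prob_mono fun x hx => ?_
        simp only [Fresh, not_forall, not_not] at hx
        obtain ⟨i, hi, hmem⟩ := hx
        rcases mem_union.1 hmem with hZ | horbit
        · exact Or.inr ⟨i, mem_range.2 hi, hZ⟩
        · exact Or.inl fun hfresh => hfresh i hi (mem_union_right _ horbit)
    _ ≤ s + h * Δ ^ h * #Z / Fintype.card α :=
        (prob_or_le _ _).trans (add_le_add hs (prob_exists_iterate_mem_le hΔ hΔ₁ h Z))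

theorem prob_not_freshPair_le (hs : prob (fun x => ¬Fresh b h ∅ x) ≤ s)
    (hΔ : ∀ z, #{x | b x = z} ≤ Δ) (hΔ₁ : 1 ≤ Δ) (Z : Finset α) :
    prob (fun p : α × α => ¬FreshPair b h Z p.1 p.2) ≤
      2 * s + h * Δ ^ h * (2 * #Z + h) / Fintype.card α := by
  have hs₀ : 0 ≤ s := (prob_nonneg _).trans hs
  have hsecond (u : α) : prob (fun v => ¬Fresh b h (Z ∪ orbitPrefix b h u) v) ≤
      s + h * Δ ^ h * (#Z + h) / Fintype.card α := by
    refine (prob_not_fresh_le hs hΔ hΔ₁ _).trans ?_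
    gcongr
    exact mod_cast (card_union_le _ _).trans (Nat.add_le_add_left card_orbitPrefix_le _)
  calc prob (fun p : α × α => ¬FreshPair b h Z p.1 p.2)
      = prob (fun p : α × α => ¬FreshPair b h Z p.2 p.1) :=
        prob_prod_comm fun u v => ¬FreshPair b h Z u v
    _ ≤ prob (fun u => ¬Fresh b h Z u) + (s + h * Δ ^ h * (#Z + h) / Fintype.card α) := by
        refine prob_prod_le_add (P := fun v u => ¬FreshPair b h Z u v) (by positivity)
          fun u hu => ?_
        simpa only [FreshPair, hu, true_and] using hsecond u
    _ ≤ (s + h * Δ ^ h * #Z / Fintype.card α) + (s + h * Δ ^ h * (#Z + h) / Fintype.card α) := by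
        gcongr
        exact prob_not_fresh_le hs hΔ hΔ₁ Z
    _ = 2 * s + h * Δ ^ h * (2 * #Z + h) / Fintype.card α := by ring

end FreshProbability

section UpperBound

variable {α : Type*} [Fintype α] [DecidableEq α] {b : α → α} {h Δ m T : ℕ} {θ : ℝ}

/-- The typical features of a random map `b` on which the exposure of the other letter relies:
short orbits rarely close up, indegrees are at most `Δ`, and there are at most `m` periodic
points. -/
structure Regular (b : α → α) (h Δ m : ℕ) : Prop where
  prob_not_fresh_le : prob (fun u => ¬Fresh b h ∅ u) ≤ 1 / √(Fintype.card α)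
  card_preimage_le : ∀ z, #{x | b x = z} ≤ Δ
  card_periodicFinset_le : #(periodicFinset b) ≤ m

theorem prob_not_regular_le [Nonempty α] (h Δ m : ℕ) :
    prob (fun b : α → α => ¬Regular b h Δ m) ≤
      (∑ k ∈ range (2 * h + 1), (k : ℝ) ^ (k + 2)) / Fintype.card α +
        (Fintype.card α / (Δ + 1)! + Fintype.card α * exp (-(m ^ 2 / (2 * Fintype.card α)))) :=
  calc prob (fun b : α → α => ¬Regular b h Δ m)
      ≤ prob (fun b : α → α => 1 / √(Fintype.card α) < prob (fun u => ¬Fresh b h ∅ u) ∨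
          (∃ z, Δ + 1 ≤ #{x | b x = z}) ∨ m < #(periodicFinset b)) := by
        refine prob_mono fun b hb => ?_
        contrapose! hb
        exact ⟨hb.1, fun z => Nat.lt_succ_iff.1 (hb.2.1 z), hb.2.2⟩
    _ ≤ _ := (prob_or_le _ _).trans <| add_le_add (prob_one_div_sqrt_lt_prob_not_fresh_le h) <|
        (prob_or_le _ _).trans <| add_le_add (prob_exists_le_card_preimage_le (Δ + 1))
          (prob_lt_card_periodicFinset_le m)

theorem Regular.prob_exists_rich_not_mergeable_le [Nonempty α] (hb : Regular b h Δ m)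
    (hΔ : 1 ≤ Δ) (hθ : 0 ≤ θ)
    (hfresh : 2 / √(Fintype.card α) + h * Δ ^ h * (5 * h + 4 * h * T) / Fintype.card α ≤
      θ - θ ^ h) :
    prob (fun a : α → α => ∃ x y, Rich b h x y ∧ ¬Mergeable (automaton a b) x y) ≤
      Fintype.card α ^ 2 * ((1 - (m : ℝ)⁻¹) ^ T + θ ^ h) := by
  have hκ : 0 ≤ 1 - (m : ℝ)⁻¹ := sub_nonneg.2 (Nat.cast_inv_le_one m)
  have hpair (x y : α) (hxy : Rich b h x y) :
      prob (fun a : α → α => ¬Mergeable (automaton a b) x y) ≤ (1 - (m : ℝ)⁻¹) ^ T + θ ^ h := by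
    refine prob_not_mergeable_le_of_rich hκ hθ (prob_iterate_ne_le hb.card_periodicFinset_le)
      (fun Z hZ => ?_) hxy
    refine (prob_not_freshPair_le hb.prob_not_fresh_le hb.card_preimage_le hΔ Z).trans ?_
    have hZ' : (#Z : ℝ) ≤ 2 * h + 2 * h * T := mod_cast hZ
    refine le_trans ?_ hfresh
    rw [mul_one_div]
    gcongr _ + _ * ?_ / _
    linarith
  calc prob (fun a : α → α => ∃ x y, Rich b h x y ∧ ¬Mergeable (automaton a b) x y)
      ≤ prob (fun a : α → α => ∃ p ∈ (univ : Finset (α × α)),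
          Rich b h p.1 p.2 ∧ ¬Mergeable (automaton a b) p.1 p.2) :=
        prob_mono fun a ⟨x, y, hxy⟩ => ⟨(x, y), mem_univ _, hxy⟩
    _ ≤ ∑ _p : α × α, ((1 - (m : ℝ)⁻¹) ^ T + θ ^ h) := by
        refine (prob_exists_le _ _).trans (sum_le_sum fun p _ => ?_)
        by_cases hp : Rich b h p.1 p.2
        · simpa only [hp, true_and] using hpair p.1 p.2 hp
        · rw [prob_eq_zero fun a ha => hp ha.1]
          positivity
    _ = Fintype.card α ^ 2 * ((1 - (m : ℝ)⁻¹) ^ T + θ ^ h) := by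
        rw [sum_const, card_univ, Fintype.card_prod, nsmul_eq_mul, Nat.cast_mul, sq]

theorem prob_not_synchronizing_le [Nonempty α] (hh : 0 < h) (hΔ : 1 ≤ Δ) (hθ : 0 ≤ θ)
    (hfresh : 2 / √(Fintype.card α) + h * Δ ^ h * (5 * h + 4 * h * T) / Fintype.card α ≤
      θ - θ ^ h) :
    prob (fun ab : (α → α) × (α → α) => ¬Synchronizing (automaton ab.1 ab.2)) ≤
      (∑ k ∈ range (11 * h + 1), 4 ^ k * (k : ℝ) ^ (k + 1)) / Fintype.card α +
        ((∑ k ∈ range (2 * h + 1), (k : ℝ) ^ (k + 2)) / Fintype.card α +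
          (Fintype.card α / (Δ + 1)! + Fintype.card α * exp (-(m ^ 2 / (2 * Fintype.card α)))) +
            Fintype.card α ^ 2 * ((1 - (m : ℝ)⁻¹) ^ T + θ ^ h)) := by
  have hκ : 0 ≤ 1 - (m : ℝ)⁻¹ := sub_nonneg.2 (Nat.cast_inv_le_one m)
  calc prob (fun ab : (α → α) × (α → α) => ¬Synchronizing (automaton ab.1 ab.2))
      ≤ prob (fun ab : (α → α) × (α → α) => ¬LocallySparse ab.1 ab.2 (11 * h) ∨
          ∃ x y, Rich ab.2 h x y ∧ ¬Mergeable (automaton ab.1 ab.2) x y) := by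
        refine prob_mono fun ab hsync => ?_
        contrapose! hsync
        exact synchronizing_of_forall_mergeable (hsync.1.mergeable hh hsync.2)
    _ ≤ _ := (prob_or_le _ _).trans <| add_le_add (prob_not_locallySparse_le (11 * h)) <|
        (prob_prod_le_add (G := fun b => Regular b h Δ m) (by positivity) fun b hb =>
          hb.prob_exists_rich_not_mergeable_le hΔ hθ hfresh).trans <|
        add_le_add_left (prob_not_regular_le h Δ m) _

end UpperBound

section Parameters

theorem eventually_pow_le_exp (k : ℕ) : ∀ᶠ t : ℝ in atTop, t ^ k ≤ exp t := by
  filter_upwards [(tendsto_exp_div_pow_atTop k).eventually_ge_atTop 1, eventually_gt_atTop 0]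
    with t hle ht
  rwa [one_le_div (by positivity)] at hle

theorem eventually_exp_le_factorial_ceil : ∀ᶠ t : ℝ in atTop, exp t ≤ (⌈t⌉₊ + 1)! := by
  have hlim := (tendsto_nat_ceil_atTop (α := ℝ)).eventually
    ((FloorSemiring.tendsto_pow_div_factorial_atTop (exp 1)).eventually_le_const one_pos)
  filter_upwards [hlim] with t ht
  rw [div_le_one (by positivity), ← exp_nat_mul, mul_one] at ht
  calc exp t ≤ exp ⌈t⌉₊ := exp_le_exp.2 (Nat.le_ceil t)
    _ ≤ ⌈t⌉₊ ! := ht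
    _ ≤ (⌈t⌉₊ + 1)! := mod_cast Nat.factorial_le (Nat.le_succ _)

theorem one_sub_inv_pow_mul_le {m q : ℕ} (hm : 0 < m) : (1 - (m : ℝ)⁻¹) ^ (m * q) ≤ exp (-q) :=
  calc (1 - (m : ℝ)⁻¹) ^ (m * q) ≤ exp (-(m : ℝ)⁻¹) ^ (m * q) :=
        pow_le_pow_left₀ (sub_nonneg.2 (Nat.cast_inv_le_one m)) (one_sub_le_exp_neg _) _
    _ = exp (-q) := by
        rw [← exp_nat_mul]
        congr 1
        push_cast
        field_simp

variable {t : ℝ} {q : ℕ}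

theorem not_freshPair_bound_le (ht : 2 ^ 32 ≤ t) (hq : (q : ℝ) ≤ 2 * t) :
    2 / t ^ 32 + 16 * q ^ 16 * (5 * 16 + 4 * 16 * q ^ 34) / t ^ 64 ≤
      (t ^ 12)⁻¹ - (t ^ 12)⁻¹ ^ 16 := by
  have : 0 < t := by linarith
  have ht₁ : 1 ≤ t := by linarith
  have hfirst : 2 / t ^ 32 ≤ 2 / t ^ 14 := by gcongr; norm_num
  have hsecond : 16 * q ^ 16 * (5 * 16 + 4 * 16 * q ^ 34) / t ^ 64 ≤ 2 ^ 61 / t ^ 14 :=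
    calc 16 * q ^ 16 * (5 * 16 + 4 * 16 * q ^ 34) / t ^ 64
        ≤ 16 * (2 * t) ^ 16 * (5 * 16 * t ^ 34 + 4 * 16 * (2 * t) ^ 34) / t ^ 64 := by
          have hconst : (5 * 16 : ℝ) ≤ 5 * 16 * t ^ 34 :=
            le_mul_of_one_le_right (by norm_num) (one_le_pow₀ ht₁)
          gcongr _ * ?_ ^ _ * (?_ + _ * ?_ ^ _) / _
      _ = (2 ^ 60 + 5 * 2 ^ 24) / t ^ 14 := by field_simp; ring
      _ ≤ 2 ^ 61 / t ^ 14 := by gcongr; norm_num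
  have hthird : (t ^ 12)⁻¹ ^ 16 ≤ 1 / t ^ 14 := by
    rw [inv_pow, ← pow_mul, inv_eq_one_div]
    gcongr; norm_num
  have htotal : 2 / t ^ 14 + 2 ^ 61 / t ^ 14 + 1 / t ^ 14 ≤ (t ^ 12)⁻¹ := by
    rw [← add_div, ← add_div, div_le_iff₀ (by positivity),
      show (t ^ 12)⁻¹ * t ^ 14 = t ^ 2 by field_simp]
    nlinarith
  linarith

theorem le_pow_sq_div (ht : 2 ≤ t) (hq : t ≤ q) : t ≤ (q ^ 33 : ℕ) ^ 2 / (2 * t ^ 64) := by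
  have : 0 < t := by linarith
  rw [le_div_iff₀ (by positivity)]
  push_cast
  calc t * (2 * t ^ 64) ≤ t * (t * t ^ 64) := by gcongr
    _ = (t ^ 33) ^ 2 := by ring
    _ ≤ ((q : ℝ) ^ 33) ^ 2 := by gcongr

theorem exp_neg_le_inv_pow (ht : 0 < t) (hexp : t ^ 192 ≤ exp t) : exp (-t) ≤ (t ^ 192)⁻¹ :=
  exp_neg t ▸ inv_anti₀ (by positivity) hexp

theorem sq_mul_unmerged_bound_le (ht : 0 < t) (hq : t ≤ q) (hexp : t ^ 192 ≤ exp t) :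
    (t ^ 64) ^ 2 * ((1 - ((q ^ 33 : ℕ) : ℝ)⁻¹) ^ (q ^ 34) + (t ^ 12)⁻¹ ^ 16) ≤ 2 / t ^ 64 := by
  have hq₀ : 0 < q := Nat.cast_pos.1 (ht.trans_le hq)
  have hκ : (1 - ((q ^ 33 : ℕ) : ℝ)⁻¹) ^ (q ^ 34) ≤ (t ^ 192)⁻¹ :=
    (one_sub_inv_pow_mul_le (pow_pos hq₀ 33)).trans
      ((exp_le_exp.2 (neg_le_neg hq)).trans (exp_neg_le_inv_pow ht hexp))
  calc (t ^ 64) ^ 2 * ((1 - ((q ^ 33 : ℕ) : ℝ)⁻¹) ^ (q ^ 34) + (t ^ 12)⁻¹ ^ 16)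
      ≤ (t ^ 64) ^ 2 * ((t ^ 192)⁻¹ + (t ^ 12)⁻¹ ^ 16) := by gcongr
    _ = 2 / t ^ 64 := by field_simp; norm_num

theorem prob_not_synchronizing_le_div_card {α : Type*} [Fintype α] [DecidableEq α] [Nonempty α]
    (hcard : (Fintype.card α : ℝ) = t ^ 64) (ht : 2 ^ 32 ≤ t) (hexp : t ^ 192 ≤ exp t)
    (hfact : exp t ≤ (⌈t⌉₊ + 1)!) :
    prob (fun ab : (α → α) × (α → α) => ¬Synchronizing (automaton ab.1 ab.2)) ≤
      (∑ k ∈ range 177, 4 ^ k * (k : ℝ) ^ (k + 1) + ∑ k ∈ range 33, (k : ℝ) ^ (k + 2) + 4) /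
        Fintype.card α := by
  have ht₀ : 0 < t := by linarith
  set q := ⌈t⌉₊
  have htq : t ≤ q := Nat.le_ceil t
  have hq : 0 < q := Nat.ceil_pos.2 ht₀
  have hqt : (q : ℝ) ≤ 2 * t := by linarith [Nat.ceil_lt_add_one ht₀.le]
  have hsqrt : √(t ^ 64) = t ^ 32 := by
    rw [show t ^ 64 = (t ^ 32) ^ 2 by ring, sqrt_sq (by positivity)]
  -- With `n = t ^ 64` states, `θ ^ h = n⁻³` beats the `n ^ 2` pairs, and so does
  -- `(1 - m⁻¹) ^ T ≤ exp (-q)`; `h * Δ ^ h * T / n` has order `t⁻¹⁴`, which is below `θ`.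
  have hbound := prob_not_synchronizing_le (α := α) (h := 16) (Δ := q) (m := q ^ 33) (T := q ^ 34)
    (θ := (t ^ 12)⁻¹) (by norm_num) hq (by positivity) (by
      rw [hcard, hsqrt]
      exact_mod_cast not_freshPair_bound_le ht hqt)
  have hsmall : t ^ 64 * (t ^ 192)⁻¹ ≤ 1 / t ^ 64 := by
    rw [show t ^ 64 * (t ^ 192)⁻¹ = 1 / t ^ 128 by field_simp]
    gcongr <;> linarith
  have hindegree : t ^ 64 / (q + 1)! ≤ 1 / t ^ 64 :=
    (mul_le_mul_of_nonneg_left (inv_anti₀ (by positivity) (hexp.trans hfact))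
      (by positivity)).trans hsmall
  have hperiodic : t ^ 64 * exp (-((q ^ 33 : ℕ) ^ 2 / (2 * t ^ 64))) ≤ 1 / t ^ 64 :=
    (mul_le_mul_of_nonneg_left ((exp_le_exp.2 (neg_le_neg (le_pow_sq_div (by linarith) htq))).trans
      (exp_neg_le_inv_pow ht₀ hexp)) (by positivity)).trans hsmall
  have hmerge := sq_mul_unmerged_bound_le ht₀ htq hexp
  rw [hcard] at hbound ⊢
  refine hbound.trans ?_
  rw [add_div, add_div, show (4 : ℝ) / t ^ 64 = 1 / t ^ 64 + 1 / t ^ 64 + 2 / t ^ 64 by ring]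
  linarith

end Parameters

section LowerBound

/-- The point `i` is a fixed point of `f` which is the image of no other point, and `f` has no
other fixed point. When `i` is such a point for both letters, it cannot be merged with any other
state; the uniqueness makes these events disjoint for distinct `i`. -/
def IsIsolatedFixedPt {α : Type*} (f : α → α) (i : α) : Prop :=
  ∀ j, (f j = i ↔ j = i) ∧ (f j = j → j = i)

theorem not_synchronizing_of_isolated {Q A : Type*} [Nontrivial Q] {δ : Q → A → Q} {i : Q}
    (hi : ∀ q c, δ q c = i ↔ q = i) : ¬Synchronizing δ := by
  rintro ⟨w, hw⟩
  have hword (q : Q) : wordAct δ q w = i ↔ q = i := by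
    clear hw
    induction w generalizing q with
    | nil => rfl
    | cons c w ih => exact (ih _).trans (hi q c)
  obtain ⟨q, hq⟩ := exists_ne i
  exact hq ((hword q).1 (hw q i ▸ (hword i).2 rfl))

variable {α : Type*} [Fintype α] [DecidableEq α]

theorem prob_isIsolatedFixedPt (i : α) :
    prob (fun f : α → α => IsIsolatedFixedPt f i) =
      1 / Fintype.card α * ((Fintype.card α - 2 : ℕ) / Fintype.card α : ℝ) ^ (Fintype.card α - 1) :=
  calc prob (fun f : α → α => IsIsolatedFixedPt f i)
      = prob (fun f : α → α => ∀ j, f j ∈ (if j = i then {i} else {i, j}ᶜ : Finset α)) := by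
        refine congrArg prob (funext fun f => propext (forall_congr' fun j => ?_))
        by_cases hj : j = i <;> simp [hj]
    _ = 1 / Fintype.card α * ∏ _j ∈ {i}ᶜ, ((Fintype.card α - 2 : ℕ) / Fintype.card α : ℝ) := by
        rw [prob_forall_mem fun j => if j = i then {i} else {i, j}ᶜ,
          Fintype.prod_eq_mul_prod_compl i, if_pos rfl, card_singleton, Nat.cast_one]
        congr 1
        refine prod_congr rfl fun j hj => ?_
        have hji : j ≠ i := by simpa using hj
        rw [if_neg hji, card_compl, card_pair hji.symm]
    _ = 1 / Fintype.card α *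
          ((Fintype.card α - 2 : ℕ) / Fintype.card α : ℝ) ^ (Fintype.card α - 1) := by
        rw [prod_const, card_compl, card_singleton]

theorem exp_neg_four_le_pow {n : ℕ} (hn : 3 ≤ n) : exp (-4) ≤ ((n - 2 : ℕ) / n : ℝ) ^ (n - 1) := by
  obtain ⟨k, rfl⟩ := Nat.exists_eq_add_of_le' hn
  have hbase : ((k + 3 : ℕ) / (k + 3 - 2 : ℕ) : ℝ) ≤ exp (2 / (k + 1)) := by
    refine le_trans (le_of_eq ?_) (add_one_le_exp _)
    rw [show k + 3 - 2 = k + 1 by omega]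
    push_cast
    field_simp
    ring
  have hpow : ((k + 3 : ℕ) / (k + 3 - 2 : ℕ) : ℝ) ^ (k + 3 - 1) ≤ exp 4 :=
    calc ((k + 3 : ℕ) / (k + 3 - 2 : ℕ) : ℝ) ^ (k + 3 - 1)
        ≤ exp (2 / (k + 1)) ^ (k + 3 - 1) := by gcongr
      _ = exp ((k + 2) * 2 / (k + 1)) := by
        rw [← exp_nat_mul, show k + 3 - 1 = k + 2 by omega]
        push_cast
        rw [mul_div_assoc]
      _ ≤ exp 4 := by
        gcongr
        rw [div_le_iff₀ (by positivity)]
        linarith [(k.cast_nonneg : (0 : ℝ) ≤ k)]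
  rw [exp_neg, ← inv_div, inv_pow]
  exact inv_anti₀ (pow_pos (div_pos (by positivity) (Nat.cast_pos.2 (by omega))) _) hpow

theorem div_card_le_prob_not_synchronizing (hcard : 3 ≤ Fintype.card α) :
    exp (-4) ^ 2 / Fintype.card α ≤
      prob (fun ab : (α → α) × (α → α) => ¬Synchronizing (automaton ab.1 ab.2)) := by
  have : Nontrivial α := Fintype.one_lt_card_iff_nontrivial.1 (by omega)
  calc exp (-4) ^ 2 / Fintype.card α
      = ∑ _i : α, (1 / Fintype.card α * exp (-4)) ^ 2 := by
        rw [sum_const, card_univ, nsmul_eq_mul]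
        field_simp
    _ ≤ ∑ i : α, prob (fun f : α → α => IsIsolatedFixedPt f i) ^ 2 := by
        gcongr with i
        rw [prob_isIsolatedFixedPt]
        gcongr
        exact exp_neg_four_le_pow hcard
    _ = prob (fun ab : (α → α) × (α → α) => ∃ i ∈ univ,
          IsIsolatedFixedPt ab.1 i ∧ IsIsolatedFixedPt ab.2 i) := by
        rw [prob_exists_eq_sum]
        · refine sum_congr rfl fun i _ => ?_
          rw [sq, prob_prod_and (IsIsolatedFixedPt · i) (IsIsolatedFixedPt · i)]
        · exact fun ab i _ j _ hi hj => (hj.1 i).2 ((hi.1 i).1.2 rfl)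
    _ ≤ prob (fun ab : (α → α) × (α → α) => ¬Synchronizing (automaton ab.1 ab.2)) := by
        refine prob_mono fun ab ⟨i, _, ha, hb⟩ => not_synchronizing_of_isolated (i := i) ?_
        rintro q (_ | _)
        exacts [(ha q).1, (hb q).1]

end LowerBound

theorem probNotSynchronizing_eq_prob (n : ℕ) :
    probNotSynchronizing n =
      prob fun ab : (Fin n → Fin n) × (Fin n → Fin n) => ¬Synchronizing (automaton ab.1 ab.2) := by
  classical
  rw [probNotSynchronizing, prob_eq_card_div]
  congr!

theorem div_le_probNotSynchronizing {n : ℕ} (hn : 3 ≤ n) :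
    exp (-4) ^ 2 / n ≤ probNotSynchronizing n := by
  rw [probNotSynchronizing_eq_prob]
  simpa using div_card_le_prob_not_synchronizing (α := Fin n) (by simpa using hn)

theorem exists_eventually_probNotSynchronizing_le :
    ∃ C > 0, ∀ᶠ n : ℕ in atTop, probNotSynchronizing n ≤ C / n := by
  refine ⟨∑ k ∈ range 177, 4 ^ k * (k : ℝ) ^ (k + 1) + ∑ k ∈ range 33, (k : ℝ) ^ (k + 2) + 4,
    by positivity, ?_⟩
  have hroot : Tendsto (fun n : ℕ => (n : ℝ) ^ ((64 : ℕ) : ℝ)⁻¹) atTop atTop :=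
    (tendsto_rpow_atTop (by norm_num)).comp tendsto_natCast_atTop_atTop
  filter_upwards [hroot.eventually_ge_atTop (2 ^ 32), hroot.eventually (eventually_pow_le_exp 192),
    hroot.eventually eventually_exp_le_factorial_ceil, eventually_gt_atTop 0]
    with n ht hexp hfact hn
  have : NeZero n := ⟨hn.ne'⟩
  have hcard : (Fintype.card (Fin n) : ℝ) = ((n : ℝ) ^ ((64 : ℕ) : ℝ)⁻¹) ^ 64 := by
    rw [Fintype.card_fin, rpow_inv_natCast_pow n.cast_nonneg (by norm_num)]
  have hbound := prob_not_synchronizing_le_div_card hcard ht hexp hfact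
  rwa [Fintype.card_fin, ← probNotSynchronizing_eq_prob] at hbound

end RandomAutomaton

/-- The probability that a uniformly random 2-letter `n`-state automaton is not
synchronizing is `Θ(1/n)`; equivalently, the probability of being synchronizing
is `1 − Θ(1/n)`. -/
theorem probNotSynchronizing_theta_one_div_n :
    ∃ c₁ > (0 : ℝ), ∃ c₂ > (0 : ℝ), ∃ N : ℕ, ∀ n : ℕ, N ≤ n →
      c₁ / n ≤ probNotSynchronizing n ∧ probNotSynchronizing n ≤ c₂ / n := by
  obtain ⟨c, hc, hupper⟩ := RandomAutomaton.exists_eventually_probNotSynchronizing_le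
  obtain ⟨N, hN⟩ := Filter.eventually_atTop.1 hupper
  refine ⟨Real.exp (-4) ^ 2, by positivity, c, hc, max 3 N, fun n hn => ⟨?_, ?_⟩⟩
  · exact RandomAutomaton.div_le_probNotSynchronizing ((le_max_left 3 N).trans hn)
  · exact hN n ((le_max_right 3 N).trans hn)
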